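/- Assume h(t,x,·) is convex on ℝ^m for every (t,x), and that the optimal control problem admits an optimal admissible pair (x*,u*), unique up to equality for Lebesgue-a.e. t. Then problem (P) is feasible if and only if problem (Q) is feasible; and if (P) is feasible, then its infimum p* is attained and p* = J* = J(x*,u*). -/

import Mathlib

open MeasureTheory Set ProbabilityTheory

noncomputable section

/-- The input constraint set `U = [-1,1]^m`. -/
def Ubox (m : ℕ) : Set (Fin m → ℝ) := Set.Icc (fun _ => (-1 : ℝ)) (fun _ => (1 : ℝ))

/-- The controlled vector field `F(t,x,u) = f(t,x) + g(t,x) u`. -/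
def Fvec {n m : ℕ} (f : ℝ × (Fin n → ℝ) → Fin n → ℝ)
    (g : ℝ × (Fin n → ℝ) → Fin n → Fin m → ℝ)
    (z : ℝ × (Fin n → ℝ) × (Fin m → ℝ)) : Fin n → ℝ :=
  fun k => f (z.1, z.2.1) k + ∑ j, g (z.1, z.2.1) k j * z.2.2 j

/-- `(L_F v)(t,x,u) = ∂v/∂t + Σ_k (∂v/∂x_k)·[F(t,x,u)]_k`. -/
def LFop {n m : ℕ} (f : ℝ × (Fin n → ℝ) → Fin n → ℝ)
    (g : ℝ × (Fin n → ℝ) → Fin n → Fin m → ℝ)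
    (v : ℝ × (Fin n → ℝ) → ℝ) (z : ℝ × (Fin n → ℝ) × (Fin m → ℝ)) : ℝ :=
  fderiv ℝ v (z.1, z.2.1) ((1 : ℝ), (0 : Fin n → ℝ)) +
    ∑ k, fderiv ℝ v (z.1, z.2.1) ((0 : ℝ), Pi.single k (1 : ℝ)) * Fvec f g z k

/-- Liouville's equation for a pair of measures `(η, ηT)` with initial point `x₀`. -/
def SatisfiesLiouville {n m : ℕ} (T : ℝ) (x₀ : Fin n → ℝ)
    (f : ℝ × (Fin n → ℝ) → Fin n → ℝ) (g : ℝ × (Fin n → ℝ) → Fin n → Fin m → ℝ)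
    (η : Measure (ℝ × (Fin n → ℝ) × (Fin m → ℝ))) (ηT : Measure (Fin n → ℝ)) : Prop :=
  ∀ v : ℝ × (Fin n → ℝ) → ℝ, ContDiff ℝ 1 v →
    v (0, x₀) + ∫ z, LFop f g v z ∂η = ∫ y, v (T, y) ∂ηT

/-- An admissible pair: a Borel measurable control `u` with values in `U` and an
absolutely continuous trajectory `x` with `x(0) = x₀`, `x(T) ∈ X_T`, `x(t) ∈ X` on `[0,T]`
and `ẋ = F(t,x,u)` a.e. (encoded in integral form). -/
def IsAdmissiblePair {n m : ℕ} (T : ℝ) (X XT : Set (Fin n → ℝ)) (x₀ : Fin n → ℝ)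
    (f : ℝ × (Fin n → ℝ) → Fin n → ℝ) (g : ℝ × (Fin n → ℝ) → Fin n → Fin m → ℝ)
    (x : ℝ → Fin n → ℝ) (u : ℝ → Fin m → ℝ) : Prop :=
  Measurable u ∧ (∀ t ∈ Set.Icc (0 : ℝ) T, u t ∈ Ubox m) ∧
  x 0 = x₀ ∧ x T ∈ XT ∧ (∀ t ∈ Set.Icc (0 : ℝ) T, x t ∈ X) ∧
  IntegrableOn (fun s => Fvec f g (s, x s, u s)) (Set.Icc (0 : ℝ) T) volume ∧
  ∀ t ∈ Set.Icc (0 : ℝ) T, x t = x₀ + ∫ s in Set.Icc (0 : ℝ) t, Fvec f g (s, x s, u s)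

/-- The cost `J(x,u) = ∫₀^T h(t,x(t),u(t)) dt + H(x(T))` of an admissible pair. -/
def Jcost {n m : ℕ} (T : ℝ) (h : ℝ × (Fin n → ℝ) × (Fin m → ℝ) → ℝ)
    (H : (Fin n → ℝ) → ℝ) (x : ℝ → Fin n → ℝ) (u : ℝ → Fin m → ℝ) : ℝ :=
  (∫ t in Set.Icc (0 : ℝ) T, h (t, x t, u t)) + H (x T)

/-- The set of costs of admissible pairs; its infimum is `J*`. -/
def JVals {n m : ℕ} (T : ℝ) (X XT : Set (Fin n → ℝ)) (x₀ : Fin n → ℝ)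
    (f : ℝ × (Fin n → ℝ) → Fin n → ℝ) (g : ℝ × (Fin n → ℝ) → Fin n → Fin m → ℝ)
    (h : ℝ × (Fin n → ℝ) × (Fin m → ℝ) → ℝ) (H : (Fin n → ℝ) → ℝ) : Set ℝ :=
  {c | ∃ (x : ℝ → Fin n → ℝ) (u : ℝ → Fin m → ℝ),
    IsAdmissiblePair T X XT x₀ f g x u ∧ c = Jcost T h H x u}

/-- Feasibility for problem `(Q)`. -/
def QFeasible {n m : ℕ} (T : ℝ) (X XT : Set (Fin n → ℝ)) (x₀ : Fin n → ℝ)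
    (f : ℝ × (Fin n → ℝ) → Fin n → ℝ) (g : ℝ × (Fin n → ℝ) → Fin n → Fin m → ℝ)
    (η : Measure (ℝ × (Fin n → ℝ) × (Fin m → ℝ))) (ηT : Measure (Fin n → ℝ)) : Prop :=
  IsFiniteMeasure η ∧ IsFiniteMeasure ηT ∧
  η ((Set.Icc (0 : ℝ) T ×ˢ X ×ˢ Ubox m)ᶜ) = 0 ∧ ηT (XTᶜ) = 0 ∧
  SatisfiesLiouville T x₀ f g η ηT

/-- The cost `⟨η,h⟩ + ⟨η_T,H⟩` of a pair of measures. -/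
def Qcost {n m : ℕ} (h : ℝ × (Fin n → ℝ) × (Fin m → ℝ) → ℝ) (H : (Fin n → ℝ) → ℝ)
    (η : Measure (ℝ × (Fin n → ℝ) × (Fin m → ℝ))) (ηT : Measure (Fin n → ℝ)) : ℝ :=
  ∫ z, h z ∂η + ∫ y, H y ∂ηT

/-- The set of costs of feasible points of `(Q)`; its infimum is `q*`. -/
def QVals {n m : ℕ} (T : ℝ) (X XT : Set (Fin n → ℝ)) (x₀ : Fin n → ℝ)
    (f : ℝ × (Fin n → ℝ) → Fin n → ℝ) (g : ℝ × (Fin n → ℝ) → Fin n → Fin m → ℝ)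
    (h : ℝ × (Fin n → ℝ) × (Fin m → ℝ) → ℝ) (H : (Fin n → ℝ) → ℝ) : Set ℝ :=
  {c | ∃ (η : Measure (ℝ × (Fin n → ℝ) × (Fin m → ℝ))) (ηT : Measure (Fin n → ℝ)),
    QFeasible T X XT x₀ f g η ηT ∧ c = Qcost h H η ηT}

/-- `(L_f v)(t,x) = ∂v/∂t + Σ_k (∂v/∂x_k)·[f(t,x)]_k`. -/
def Lfop {n : ℕ} (f : ℝ × (Fin n → ℝ) → Fin n → ℝ)
    (v : ℝ × (Fin n → ℝ) → ℝ) (z : ℝ × (Fin n → ℝ)) : ℝ :=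
  fderiv ℝ v z ((1 : ℝ), (0 : Fin n → ℝ)) +
    ∑ k, fderiv ℝ v z ((0 : ℝ), Pi.single k (1 : ℝ)) * f z k

/-- `[L_g v]_j(t,x) = Σ_k (∂v/∂x_k)·g_{kj}(t,x)`. -/
def Lgop {n m : ℕ} (g : ℝ × (Fin n → ℝ) → Fin n → Fin m → ℝ)
    (v : ℝ × (Fin n → ℝ) → ℝ) (j : Fin m) (z : ℝ × (Fin n → ℝ)) : ℝ :=
  ∑ k, fderiv ℝ v z ((0 : ℝ), Pi.single k (1 : ℝ)) * g z k j

/-- Feasibility for the primal problem `(P)`. -/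
def PFeasible {n m : ℕ} (T : ℝ) (X XT : Set (Fin n → ℝ)) (x₀ : Fin n → ℝ)
    (f : ℝ × (Fin n → ℝ) → Fin n → ℝ) (g : ℝ × (Fin n → ℝ) → Fin n → Fin m → ℝ)
    (μ : Measure (ℝ × (Fin n → ℝ) × (Fin m → ℝ))) (μT : Measure (Fin n → ℝ))
    (γ : Measure (ℝ × (Fin n → ℝ))) (σp σm σh : Fin m → Measure (ℝ × (Fin n → ℝ))) : Prop :=
  IsFiniteMeasure μ ∧ IsFiniteMeasure μT ∧ IsFiniteMeasure γ ∧
  (∀ j, IsFiniteMeasure (σp j) ∧ IsFiniteMeasure (σm j) ∧ IsFiniteMeasure (σh j)) ∧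
  μ ((Set.Icc (0 : ℝ) T ×ˢ X ×ˢ Ubox m)ᶜ) = 0 ∧ μT (XTᶜ) = 0 ∧
  γ ((Set.Icc (0 : ℝ) T ×ˢ X)ᶜ) = 0 ∧
  (∀ j, σp j ((Set.Icc (0 : ℝ) T ×ˢ X)ᶜ) = 0 ∧ σm j ((Set.Icc (0 : ℝ) T ×ˢ X)ᶜ) = 0 ∧
    σh j ((Set.Icc (0 : ℝ) T ×ˢ X)ᶜ) = 0) ∧
  -- (a) Liouville's equation
  SatisfiesLiouville T x₀ f g μ μT ∧
  -- (b) ∫ L_F v dμ = ∫ L_f v dγ + Σ_j ∫ [L_g v]_j d([σ₊]_j − [σ₋]_j)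
  (∀ v : ℝ × (Fin n → ℝ) → ℝ, ContDiff ℝ 1 v →
    ∫ z, LFop f g v z ∂μ =
      ∫ z, Lfop f v z ∂γ +
        ∑ j, (∫ z, Lgop g v j z ∂(σp j) - ∫ z, Lgop g v j z ∂(σm j))) ∧
  -- (c) [σ₊]_j + [σ₋]_j + [σ̂]_j = γ
  (∀ j, σp j + σm j + σh j = γ) ∧
  -- (d) γ is the (t,x)-marginal of μ
  γ = μ.map (fun z => (z.1, z.2.1))

/-- The set of costs of feasible points of `(P)`; its infimum is `p*`. -/
def PVals {n m : ℕ} (T : ℝ) (X XT : Set (Fin n → ℝ)) (x₀ : Fin n → ℝ)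
    (f : ℝ × (Fin n → ℝ) → Fin n → ℝ) (g : ℝ × (Fin n → ℝ) → Fin n → Fin m → ℝ)
    (h : ℝ × (Fin n → ℝ) × (Fin m → ℝ) → ℝ) (H : (Fin n → ℝ) → ℝ) : Set ℝ :=
  {c | ∃ (μ : Measure (ℝ × (Fin n → ℝ) × (Fin m → ℝ))) (μT : Measure (Fin n → ℝ))
    (γ : Measure (ℝ × (Fin n → ℝ))) (σp σm σh : Fin m → Measure (ℝ × (Fin n → ℝ))),
    PFeasible T X XT x₀ f g μ μT γ σp σm σh ∧ c = Qcost h H μ μT}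

/-!
The constraints (b)-(d) of (P) only re-encode `μ`: since `F` is affine in the input, one may take
`γ` to be the `(t,x)`-marginal of `μ`, and for `σ₊`, `σ₋`, `σ̂` the marginals of `u⁺ μ`, `u⁻ μ` and
`(1 - |u|) μ`. So (P) and (Q) have the same feasible pairs and the same costs, and occupation
measures embed the admissible pairs into both.

For the converse bound, the state constraint and the target set are replaced by penalties of weight
`N`. The value function of the resulting unconstrained control problem, averaged over a small ball,
is an almost subsolution of class `C¹` of the Hamilton-Jacobi-Bellman equation; tested against
Liouville's equation it shows that the penalized value at `(0, x₀)` is at most the infimum of (Q).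
As `N → ∞`, nearly optimal curves of the penalized problems have a uniform limit by Arzelà-Ascoli.
Convex combinations of their controls converge almost everywhere, and because `F` is affine and `h`
is convex in the input, the limit is an admissible pair of cost at most the infimum of (Q).
-/

open Filter
open scoped Topology ENNReal NNReal

/-! ### The constraints of (P) as a decomposition of an occupation measure -/

section Integrability

variable {α E : Type*} [TopologicalSpace α] [T2Space α] [MeasurableSpace α] [BorelSpace α]
  [NormedAddCommGroup E] {K : Set α} {φ : α → E} {η : Measure α} [IsFiniteMeasure η]

theorem integrable_of_continuousOn_of_isCompact (hK : IsCompact K) (hη : η Kᶜ = 0)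
    (hφ : ContinuousOn φ K) : Integrable φ η := by
  have hrestrict : η.restrict K = η :=
    Measure.restrict_eq_self_of_ae_mem
      ((measure_eq_zero_iff_ae_notMem.1 hη).mono fun _ => not_not.1)
  simpa only [IntegrableOn, hrestrict] using hφ.integrableOn_compact (μ := η) hK

end Integrability

theorem abs_apply_le_one_of_mem_Ubox {m : ℕ} {u : Fin m → ℝ} (hu : u ∈ Ubox m) (j : Fin m) :
    |u j| ≤ 1 :=
  abs_le.2 ⟨hu.1 j, hu.2 j⟩

theorem isCompact_Icc_prod_prod_Ubox {E : Type*} [TopologicalSpace E] {X : Set E}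
    (hX : IsCompact X) (m : ℕ) (T : ℝ) : IsCompact (Icc (0 : ℝ) T ×ˢ X ×ˢ Ubox m) :=
  isCompact_Icc.prod (hX.prod isCompact_Icc)

section Generator

variable {n m : ℕ} {f : ℝ × (Fin n → ℝ) → Fin n → ℝ} {g : ℝ × (Fin n → ℝ) → Fin n → Fin m → ℝ}
  {v : ℝ × (Fin n → ℝ) → ℝ} {D : Set (ℝ × (Fin n → ℝ))}
  {W : Set (ℝ × (Fin n → ℝ) × (Fin m → ℝ))}

theorem LFop_eq_fderiv (f : ℝ × (Fin n → ℝ) → Fin n → ℝ)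
    (g : ℝ × (Fin n → ℝ) → Fin n → Fin m → ℝ) (v : ℝ × (Fin n → ℝ) → ℝ)
    (z : ℝ × (Fin n → ℝ) × (Fin m → ℝ)) :
    LFop f g v z = fderiv ℝ v (z.1, z.2.1) (1, Fvec f g z) := by
  have hdecomp : ((1 : ℝ), Fvec f g z)
      = (1, 0) + ∑ k, Fvec f g z k • ((0 : ℝ), Pi.single k (1 : ℝ)) := by
    refine Prod.ext (by simp [Prod.fst_sum]) (funext fun i => ?_)
    simp [Prod.snd_sum, Finset.sum_apply, Pi.single_apply]
  rw [hdecomp, map_add, map_sum, LFop]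
  simp only [map_smul, smul_eq_mul, mul_comm]

theorem LFop_eq_Lfop_add_sum_Lgop (f : ℝ × (Fin n → ℝ) → Fin n → ℝ)
    (g : ℝ × (Fin n → ℝ) → Fin n → Fin m → ℝ) (v : ℝ × (Fin n → ℝ) → ℝ)
    (z : ℝ × (Fin n → ℝ) × (Fin m → ℝ)) :
    LFop f g v z = Lfop f v (z.1, z.2.1) + ∑ j, z.2.2 j * Lgop g v j (z.1, z.2.1) := by
  simp only [LFop, Lfop, Lgop, Fvec, mul_add, Finset.sum_add_distrib, Finset.mul_sum]
  rw [Finset.sum_comm (s := (Finset.univ : Finset (Fin m))), add_assoc]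
  congr 2
  exact Finset.sum_congr rfl fun k _ => Finset.sum_congr rfl fun j _ => by ring

theorem continuousOn_Fvec (hf : ContinuousOn f D) (hg : ContinuousOn g D)
    (hW : MapsTo (fun z => (z.1, z.2.1)) W D) : ContinuousOn (Fvec f g) W := by
  have hπ : ContinuousOn (fun z : ℝ × (Fin n → ℝ) × (Fin m → ℝ) => (z.1, z.2.1)) W := by fun_prop
  have hfπ := hf.comp hπ hW
  have hgπ := hg.comp hπ hW
  simp only [continuousOn_pi] at hfπ hgπ ⊢
  exact fun k => (hfπ k).add (continuousOn_finsetSum _ fun j _ => (hgπ k j).mul (by fun_prop))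

theorem continuousOn_LFop (hf : ContinuousOn f D) (hg : ContinuousOn g D)
    (hW : MapsTo (fun z => (z.1, z.2.1)) W D) (hv : ContDiff ℝ 1 v) :
    ContinuousOn (LFop f g v) W := by
  rw [funext (LFop_eq_fderiv f g v)]
  exact ((hv.continuous_fderiv one_ne_zero).comp (by fun_prop)).continuousOn.clm_apply
    (continuousOn_const.prodMk (continuousOn_Fvec hf hg hW))

theorem continuousOn_Lfop (hf : ContinuousOn f D) (hv : ContDiff ℝ 1 v) :
    ContinuousOn (Lfop f v) D := by
  have hv' := hv.continuous_fderiv one_ne_zero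
  exact (hv'.clm_apply continuous_const).continuousOn.add (continuousOn_finsetSum _ fun k _ =>
    (hv'.clm_apply continuous_const).continuousOn.mul (continuousOn_pi.1 hf k))

theorem continuousOn_Lgop (hg : ContinuousOn g D) (hv : ContDiff ℝ 1 v) (j : Fin m) :
    ContinuousOn (Lgop g v j) D := by
  have hv' := hv.continuous_fderiv one_ne_zero
  exact continuousOn_finsetSum _ fun k _ =>
    (hv'.clm_apply continuous_const).continuousOn.mul
      (continuousOn_pi.1 (continuousOn_pi.1 hg k) j)

end Generator

section WeightedMap

variable {α β : Type*} [MeasurableSpace α] [MeasurableSpace β] {η : Measure α}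
  {p : α → β} {w : α → ℝ} {ψ : β → ℝ}

/-- The image under `p` of the measure with density `w` with respect to `η`; negative values of `w`
are replaced by zero. With `p` the projection `(t, x, u) ↦ (t, x)`, the weights `u j`, `-u j` and
`1 - |u j|` yield the measures `[σ₊]_j`, `[σ₋]_j` and `[σ̂]_j` of problem (P). -/
def weightedMap (η : Measure α) (p : α → β) (w : α → ℝ) : Measure β :=
  (η.withDensity fun z => ENNReal.ofReal (w z)).map p

theorem weightedMap_add_neg_add_one_sub_abs (hp : Measurable p) (hw : Measurable w)
    (hw1 : ∀ᵐ z ∂η, |w z| ≤ 1) :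
    weightedMap η p w + weightedMap η p (fun z => -w z) + weightedMap η p (fun z => 1 - |w z|)
      = η.map p := by
  have hadd : Measurable fun z => ENNReal.ofReal (w z) + ENNReal.ofReal (-w z) := by fun_prop
  simp only [weightedMap]
  rw [← Measure.map_add _ _ hp, ← Measure.map_add _ _ hp,
    ← withDensity_add_left hw.ennreal_ofReal, Pi.add_def, ← withDensity_add_left hadd]
  conv_rhs => rw [← withDensity_one (μ := η)]
  congr 1
  refine withDensity_congr_ae (hw1.mono fun z hz => ?_)
  have habs : ENNReal.ofReal (w z) + ENNReal.ofReal (-w z) = ENNReal.ofReal |w z| := by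
    rcases le_total 0 (w z) with h | h
    · rw [ENNReal.ofReal_of_nonpos (neg_nonpos.2 h), add_zero, abs_of_nonneg h]
    · rw [ENNReal.ofReal_of_nonpos h, zero_add, abs_of_nonpos h]
  rw [Pi.add_apply, habs, ← ENNReal.ofReal_add (abs_nonneg _) (sub_nonneg.2 hz),
    add_sub_cancel, ENNReal.ofReal_one, Pi.one_apply]

theorem weightedMap_le_map (hp : Measurable p) (hw1 : ∀ᵐ z ∂η, w z ≤ 1) :
    weightedMap η p w ≤ η.map p := by
  refine Measure.map_mono ((withDensity_mono ?_).trans withDensity_one.le) hp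
  exact hw1.mono fun z hz => ENNReal.ofReal_le_one.2 hz

theorem integral_weightedMap (hp : Measurable p) (hw : Measurable w)
    (hψ : AEStronglyMeasurable ψ (weightedMap η p w)) :
    ∫ y, ψ y ∂weightedMap η p w = ∫ z, max (w z) 0 * ψ (p z) ∂η := by
  rw [weightedMap, integral_map hp.aemeasurable hψ,
    integral_withDensity_eq_integral_toReal_smul hw.ennreal_ofReal
      (ae_of_all _ fun _ => ENNReal.ofReal_lt_top)]
  simp only [ENNReal.toReal_ofReal', smul_eq_mul]

theorem integral_weightedMap_sub_integral_weightedMap_neg (hp : Measurable p) (hw : Measurable w)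
    (hw1 : ∀ᵐ z ∂η, |w z| ≤ 1) (hψ : Integrable ψ (η.map p)) :
    ∫ y, ψ y ∂weightedMap η p w - ∫ y, ψ y ∂weightedMap η p (fun z => -w z)
      = ∫ z, w z * ψ (p z) ∂η := by
  have hψp : Integrable (fun z => ψ (p z)) η := (integrable_map_measure hψ.1 hp.aemeasurable).1 hψ
  have hmax : ∀ s : α → ℝ, Measurable s → (∀ᵐ z ∂η, |s z| ≤ 1) →
      Integrable (fun z => max (s z) 0 * ψ (p z)) η := fun s hs hs1 =>
    hψp.bdd_mul (c := 1) (hs.max measurable_const).aestronglyMeasurable <| hs1.mono fun z hz => by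
      rw [Real.norm_eq_abs, abs_of_nonneg (le_max_right _ _)]
      exact max_le ((le_abs_self _).trans hz) zero_le_one
  have hneg : Measurable fun z => -w z := hw.neg
  have hneg1 : ∀ᵐ z ∂η, |-w z| ≤ 1 := by simpa only [abs_neg] using hw1
  have hle : weightedMap η p w ≤ η.map p :=
    weightedMap_le_map hp (hw1.mono fun z hz => (abs_le.1 hz).2)
  have hle' : weightedMap η p (fun z => -w z) ≤ η.map p :=
    weightedMap_le_map hp (hneg1.mono fun z hz => (abs_le.1 hz).2)
  rw [integral_weightedMap hp hw (hψ.mono_measure hle).1,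
    integral_weightedMap hp hneg (hψ.mono_measure hle').1,
    ← integral_sub (hmax w hw hw1) (hmax _ hneg hneg1)]
  refine integral_congr_ae (ae_of_all _ fun z => ?_)
  simp only [← sub_mul, max_zero_sub_max_neg_zero_eq_self]

end WeightedMap

section PEquivalentQ

variable {n m : ℕ} {T : ℝ} {X XT : Set (Fin n → ℝ)} {x₀ : Fin n → ℝ}
  {f : ℝ × (Fin n → ℝ) → Fin n → ℝ} {g : ℝ × (Fin n → ℝ) → Fin n → Fin m → ℝ}
  {h : ℝ × (Fin n → ℝ) × (Fin m → ℝ) → ℝ} {H : (Fin n → ℝ) → ℝ}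
  {η : Measure (ℝ × (Fin n → ℝ) × (Fin m → ℝ))} {ηT : Measure (Fin n → ℝ)}

theorem QFeasible.ae_mem (hη : QFeasible T X XT x₀ f g η ηT) :
    ∀ᵐ z ∂η, z ∈ Icc (0 : ℝ) T ×ˢ X ×ˢ Ubox m :=
  (measure_eq_zero_iff_ae_notMem.1 hη.2.2.1).mono fun _ => not_not.1

theorem QFeasible.map_time_state_compl_eq_zero (hX : IsCompact X)
    (hη : QFeasible T X XT x₀ f g η ηT) :
    η.map (fun z => (z.1, z.2.1)) (Icc (0 : ℝ) T ×ˢ X)ᶜ = 0 := by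
  rw [Measure.map_apply (by fun_prop) (measurableSet_Icc.prod hX.measurableSet).compl]
  exact measure_eq_zero_iff_ae_notMem.2 (hη.ae_mem.mono fun z hz => not_not.2 ⟨hz.1, hz.2.1⟩)

theorem integral_LFop_eq_integral_Lfop_add_sum (hX : IsCompact X)
    (hf : ContinuousOn f (Icc 0 T ×ˢ X)) (hg : ContinuousOn g (Icc 0 T ×ˢ X))
    (hη : QFeasible T X XT x₀ f g η ηT) {v : ℝ × (Fin n → ℝ) → ℝ} (hv : ContDiff ℝ 1 v) :
    ∫ z, LFop f g v z ∂η = ∫ y, Lfop f v y ∂η.map (fun z => (z.1, z.2.1)) +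
      ∑ j, (∫ y, Lgop g v j y ∂weightedMap η (fun z => (z.1, z.2.1)) (fun z => z.2.2 j) -
        ∫ y, Lgop g v j y ∂weightedMap η (fun z => (z.1, z.2.1)) (fun z => -z.2.2 j)) := by
  have := hη.1
  have hp : Measurable fun z : ℝ × (Fin n → ℝ) × (Fin m → ℝ) => (z.1, z.2.1) := by fun_prop
  have hD : IsCompact (Icc 0 T ×ˢ X) := isCompact_Icc.prod hX
  have hnull := hη.map_time_state_compl_eq_zero hX
  have hLf := integrable_of_continuousOn_of_isCompact hD hnull (continuousOn_Lfop hf hv)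
  have hLg := fun j => integrable_of_continuousOn_of_isCompact hD hnull (continuousOn_Lgop hg hv j)
  have hu1 : ∀ j, ∀ᵐ z ∂η, |z.2.2 j| ≤ 1 := fun j =>
    hη.ae_mem.mono fun z hz => abs_apply_le_one_of_mem_Ubox hz.2.2 j
  have huLg : ∀ j, Integrable (fun z => z.2.2 j * Lgop g v j (z.1, z.2.1)) η := fun j =>
    ((integrable_map_measure (hLg j).1 hp.aemeasurable).1 (hLg j)).bdd_mul
      (by fun_prop) (hu1 j)
  have hsplit := fun j => integral_weightedMap_sub_integral_weightedMap_neg hp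
    (w := fun z => z.2.2 j) (by fun_prop) (hu1 j) (hLg j)
  simp only [hsplit, LFop_eq_Lfop_add_sum_Lgop]
  rw [integral_map hp.aemeasurable hLf.1, ← integral_finsetSum _ fun j _ => huLg j]
  exact integral_add ((integrable_map_measure hLf.1 hp.aemeasurable).1 hLf)
    (integrable_finsetSum _ fun j _ => huLg j)

theorem exists_PFeasible_iff_QFeasible (hX : IsCompact X)
    (hf : ContinuousOn f (Icc 0 T ×ˢ X)) (hg : ContinuousOn g (Icc 0 T ×ˢ X)) :
    (∃ (γ : Measure (ℝ × (Fin n → ℝ))) (σp σm σh : Fin m → Measure (ℝ × (Fin n → ℝ))),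
      PFeasible T X XT x₀ f g η ηT γ σp σm σh) ↔ QFeasible T X XT x₀ f g η ηT := by
  refine ⟨fun ⟨_, _, _, _, hμ, hμT, _, _, hμK, hμTXT, _, _, hLiouville, _⟩ =>
    ⟨hμ, hμT, hμK, hμTXT, hLiouville⟩, fun hη => ?_⟩
  have := hη.1
  let p : ℝ × (Fin n → ℝ) × (Fin m → ℝ) → ℝ × (Fin n → ℝ) := fun z => (z.1, z.2.1)
  have hp : Measurable p := by fun_prop
  have hu1 : ∀ j, ∀ᵐ z ∂η, |z.2.2 j| ≤ 1 := fun j =>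
    hη.ae_mem.mono fun z hz => abs_apply_le_one_of_mem_Ubox hz.2.2 j
  have hnull := hη.map_time_state_compl_eq_zero hX
  have hle : ∀ {w}, (∀ᵐ z ∂η, w z ≤ 1) → weightedMap η p w ≤ η.map p := weightedMap_le_map hp
  have hplus := fun j => hle ((hu1 j).mono fun z hz => (abs_le.1 hz).2)
  have hminus := fun j => hle ((hu1 j).mono fun z hz => neg_le.1 (abs_le.1 hz).1)
  have hhat := fun j => hle (w := fun z => 1 - |z.2.2 j|)
    (ae_of_all _ fun z => sub_le_self 1 (abs_nonneg _))
  have hnull' : ∀ {σ : Measure (ℝ × (Fin n → ℝ))}, σ ≤ η.map p → σ (Icc 0 T ×ˢ X)ᶜ = 0 :=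
    fun hσ => le_antisymm ((hσ _).trans_eq hnull) zero_le
  have hfin : ∀ {σ : Measure (ℝ × (Fin n → ℝ))}, σ ≤ η.map p → IsFiniteMeasure σ :=
    fun hσ => isFiniteMeasure_of_le _ hσ
  exact ⟨η.map p, fun j => weightedMap η p fun z => z.2.2 j,
    fun j => weightedMap η p fun z => -z.2.2 j, fun j => weightedMap η p fun z => 1 - |z.2.2 j|,
    hη.1, hη.2.1, inferInstance, fun j => ⟨hfin (hplus j), hfin (hminus j), hfin (hhat j)⟩,
    hη.2.2.1, hη.2.2.2.1, hnull, fun j => ⟨hnull' (hplus j), hnull' (hminus j), hnull' (hhat j)⟩,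
    hη.2.2.2.2, fun v hv => integral_LFop_eq_integral_Lfop_add_sum hX hf hg hη hv,
    fun j => weightedMap_add_neg_add_one_sub_abs hp (by fun_prop) (hu1 j), rfl⟩

theorem PVals_eq_QVals (hX : IsCompact X)
    (hf : ContinuousOn f (Icc 0 T ×ˢ X)) (hg : ContinuousOn g (Icc 0 T ×ˢ X)) :
    PVals T X XT x₀ f g h H = QVals T X XT x₀ f g h H := by
  ext c
  simp only [PVals, QVals, mem_ofPred_eq, ← exists_PFeasible_iff_QFeasible hX hf hg,
    exists_and_right]

end PEquivalentQ

/-! ### Occupation measures of admissible pairs -/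

section ChainRule

variable {G : Type*} [NormedAddCommGroup G] [NormedSpace ℝ G] {a b : ℝ}

theorem integral_fderiv_apply_eq_sub {v : G → ℝ} (hv : ContDiff ℝ 1 v) {w w' : ℝ → G} {K : ℝ≥0}
    (hw : LipschitzOnWith K w (uIcc a b)) (hw' : ∀ᵐ t, t ∈ uIoc a b → HasDerivAt w (w' t) t) :
    ∫ t in a..b, fderiv ℝ v (w t) (w' t) = v (w b) - v (w a) := by
  obtain ⟨Kv, hKv⟩ := LocallyLipschitzOn.exists_lipschitzOnWith_of_compact
    (isCompact_uIcc.image_of_continuousOn hw.continuousOn) hv.locallyLipschitz.locallyLipschitzOn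
  have hvw : LipschitzOnWith (Kv * K) (v ∘ w) (uIcc a b) := hKv.comp hw (mapsTo_image _ _)
  refine Eq.trans (intervalIntegral.integral_congr_ae ?_)
    hvw.absolutelyContinuousOnInterval.integral_deriv_eq_sub
  filter_upwards [hw'] with t ht htmem
  exact ((hv.differentiable one_ne_zero (w t)).hasFDerivAt.comp_hasDerivAt t (ht htmem)).deriv.symm

theorem lipschitzOnWith_integral {w' : ℝ → G} {C : ℝ≥0} (hint : IntervalIntegrable w' volume a b)
    (hC : ∀ t ∈ uIcc a b, ‖w' t‖ ≤ C) :
    LipschitzOnWith C (fun t => ∫ s in a..t, w' s) (uIcc a b) := by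
  have hsub : ∀ t ∈ uIcc a b, ∀ s ∈ uIcc a b, IntervalIntegrable w' volume s t :=
    fun t ht s hs => hint.mono_set (uIcc_subset_uIcc hs ht)
  refine LipschitzOnWith.of_dist_le_mul fun t ht s hs => ?_
  rw [dist_eq_norm, intervalIntegral.integral_interval_sub_left
    (hsub t ht a left_mem_uIcc) (hsub s hs a left_mem_uIcc), Real.dist_eq]
  exact intervalIntegral.norm_integral_le_of_norm_le_const fun r hr =>
    hC r (uIcc_subset_uIcc hs ht (uIoc_subset_uIcc hr))

end ChainRule

section OccupationMeasure

variable {n m : ℕ} {T : ℝ} {X XT : Set (Fin n → ℝ)} {x₀ : Fin n → ℝ}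
  {f : ℝ × (Fin n → ℝ) → Fin n → ℝ} {g : ℝ × (Fin n → ℝ) → Fin n → Fin m → ℝ}
  {h : ℝ × (Fin n → ℝ) × (Fin m → ℝ) → ℝ} {H : (Fin n → ℝ) → ℝ}
  {x : ℝ → Fin n → ℝ} {u : ℝ → Fin m → ℝ}

theorem IsAdmissiblePair.mem_graph (hxu : IsAdmissiblePair T X XT x₀ f g x u) {t : ℝ}
    (ht : t ∈ Icc 0 T) : (t, x t, u t) ∈ Icc 0 T ×ˢ X ×ˢ Ubox m :=
  ⟨ht, hxu.2.2.2.2.1 t ht, hxu.2.1 t ht⟩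

theorem IsAdmissiblePair.eq_add_intervalIntegral (hxu : IsAdmissiblePair T X XT x₀ f g x u) {t : ℝ}
    (ht : t ∈ Icc 0 T) : x t = x₀ + ∫ s in (0 : ℝ)..t, Fvec f g (s, x s, u s) := by
  rw [hxu.2.2.2.2.2.2 t ht, integral_Icc_eq_integral_Ioc, intervalIntegral.integral_of_le ht.1]

theorem IsAdmissiblePair.continuousOn (hxu : IsAdmissiblePair T X XT x₀ f g x u) :
    ContinuousOn x (Icc 0 T) :=
  (continuousOn_const.add (intervalIntegral.continuousOn_primitive_Icc hxu.2.2.2.2.2.1)).congr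
    hxu.2.2.2.2.2.2

theorem IsAdmissiblePair.integral_LFop (hT : 0 ≤ T) (hX : IsCompact X)
    (hf : ContinuousOn f (Icc 0 T ×ˢ X)) (hg : ContinuousOn g (Icc 0 T ×ˢ X))
    (hxu : IsAdmissiblePair T X XT x₀ f g x u) {v : ℝ × (Fin n → ℝ) → ℝ} (hv : ContDiff ℝ 1 v) :
    v (0, x₀) + ∫ t in Icc 0 T, LFop f g v (t, x t, u t) = v (T, x T) := by
  set b : ℝ → Fin n → ℝ := fun s => Fvec f g (s, x s, u s)
  set y : ℝ → Fin n → ℝ := fun t => x₀ + ∫ s in (0 : ℝ)..t, b s with hy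
  have hxy : ∀ t ∈ uIcc 0 T, x t = y t := fun t ht =>
    hxu.eq_add_intervalIntegral (uIcc_of_le hT ▸ ht)
  have hb_int : IntervalIntegrable b volume 0 T :=
    (intervalIntegrable_iff_integrableOn_Icc_of_le hT).2 hxu.2.2.2.2.2.1
  obtain ⟨C, hC⟩ := (isCompact_Icc_prod_prod_Ubox hX m T).exists_bound_of_continuousOn
    (continuousOn_Fvec hf hg fun z hz => ⟨hz.1, hz.2.1⟩)
  have hbC : ∀ t ∈ uIcc 0 T, ‖b t‖ ≤ C.toNNReal := fun t ht =>
    (hC _ (hxu.mem_graph (uIcc_of_le hT ▸ ht))).trans (Real.le_coe_toNNReal C)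
  have hlip : LipschitzOnWith (max 1 (0 + C.toNNReal)) (fun t => (t, y t)) (uIcc 0 T) :=
    LipschitzWith.id.lipschitzOnWith.prodMk
      ((LipschitzWith.const x₀).lipschitzOnWith.add (lipschitzOnWith_integral hb_int hbC))
  have hderiv : ∀ᵐ t, t ∈ uIoc 0 T → HasDerivAt (fun t => (t, y t)) (1, b t) t := by
    filter_upwards [hb_int.ae_hasDerivAt_integral] with t ht htmem
    exact (hasDerivAt_id t).prodMk
      ((ht (uIoc_subset_uIcc htmem) 0 left_mem_uIcc).const_add x₀)
  have hLF : ∀ t ∈ uIcc 0 T, LFop f g v (t, x t, u t) = fderiv ℝ v (t, y t) (1, b t) :=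
    fun t ht => by rw [LFop_eq_fderiv, ← hxy t ht]
  have hy0 : y 0 = x₀ := by simp only [hy, intervalIntegral.integral_same, add_zero]
  rw [integral_Icc_eq_integral_Ioc, ← intervalIntegral.integral_of_le hT,
    intervalIntegral.integral_congr hLF, integral_fderiv_apply_eq_sub hv hlip hderiv,
    hxy T right_mem_uIcc, hy0, add_sub_cancel]

/-- The occupation measure of the pair `(x, u)`: the time spent by `t ↦ (t, x t, u t)`,
`t ∈ [0, T]`, in a given set. -/
def occupationMeasure {E V : Type*} [MeasurableSpace E] [MeasurableSpace V] (T : ℝ) (x : ℝ → E)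
    (u : ℝ → V) : Measure (ℝ × E × V) :=
  (volume.restrict (Icc 0 T)).map fun t => (t, x t, u t)

instance {E V : Type*} [MeasurableSpace E] [MeasurableSpace V] (T : ℝ) (x : ℝ → E)
    (u : ℝ → V) : IsFiniteMeasure (occupationMeasure T x u) := by
  unfold occupationMeasure; infer_instance

theorem IsAdmissiblePair.aemeasurable_graph (hxu : IsAdmissiblePair T X XT x₀ f g x u) :
    AEMeasurable (fun t => (t, x t, u t)) (volume.restrict (Icc 0 T)) :=
  aemeasurable_id.prodMk
    ((hxu.continuousOn.aemeasurable measurableSet_Icc).prodMk hxu.1.aemeasurable)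

theorem IsAdmissiblePair.occupationMeasure_compl_eq_zero (hX : IsCompact X)
    (hxu : IsAdmissiblePair T X XT x₀ f g x u) :
    occupationMeasure T x u (Icc (0 : ℝ) T ×ˢ X ×ˢ Ubox m)ᶜ = 0 := by
  rw [occupationMeasure, Measure.map_apply_of_aemeasurable hxu.aemeasurable_graph
    (isCompact_Icc_prod_prod_Ubox hX m T).measurableSet.compl]
  exact measure_eq_zero_iff_ae_notMem.2
    ((ae_restrict_mem measurableSet_Icc).mono fun t ht => not_not.2 (hxu.mem_graph ht))

theorem IsAdmissiblePair.integral_occupationMeasure (hX : IsCompact X)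
    (hxu : IsAdmissiblePair T X XT x₀ f g x u) {φ : ℝ × (Fin n → ℝ) × (Fin m → ℝ) → ℝ}
    (hφ : ContinuousOn φ (Icc (0 : ℝ) T ×ˢ X ×ˢ Ubox m)) :
    ∫ z, φ z ∂occupationMeasure T x u = ∫ t in Icc 0 T, φ (t, x t, u t) :=
  integral_map hxu.aemeasurable_graph (integrable_of_continuousOn_of_isCompact
    (isCompact_Icc_prod_prod_Ubox hX m T) (hxu.occupationMeasure_compl_eq_zero hX) hφ).1

theorem IsAdmissiblePair.QFeasible_occupationMeasure (hT : 0 ≤ T) (hX : IsCompact X)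
    (hXT : IsCompact XT) (hf : ContinuousOn f (Icc 0 T ×ˢ X)) (hg : ContinuousOn g (Icc 0 T ×ˢ X))
    (hxu : IsAdmissiblePair T X XT x₀ f g x u) :
    QFeasible T X XT x₀ f g (occupationMeasure T x u) (Measure.dirac (x T)) := by
  refine ⟨inferInstance, inferInstance, hxu.occupationMeasure_compl_eq_zero hX, ?_, fun v hv => ?_⟩
  · simpa [Measure.dirac_apply' _ hXT.measurableSet.compl] using hxu.2.2.2.1
  · rw [hxu.integral_occupationMeasure hX
      (continuousOn_LFop hf hg (fun z hz => ⟨hz.1, hz.2.1⟩) hv), integral_dirac,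
      hxu.integral_LFop hT hX hf hg hv]

theorem JVals_subset_QVals (hT : 0 ≤ T) (hX : IsCompact X) (hXT : IsCompact XT)
    (hf : ContinuousOn f (Icc 0 T ×ˢ X)) (hg : ContinuousOn g (Icc 0 T ×ˢ X))
    (hh : ContinuousOn h (Icc 0 T ×ˢ X ×ˢ Ubox m)) :
    JVals T X XT x₀ f g h H ⊆ QVals T X XT x₀ f g h H := by
  rintro _ ⟨x, u, hxu, rfl⟩
  refine ⟨_, _, hxu.QFeasible_occupationMeasure hT hX hXT hf hg, ?_⟩
  rw [Qcost, Jcost, hxu.integral_occupationMeasure hX hh, integral_dirac]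

end OccupationMeasure

/-! ### Smooth subsolutions for Bolza problems -/

theorem abs_ciInf_sub_ciInf_le {ι : Type*} [Nonempty ι] {φ ψ : ι → ℝ} {c : ℝ}
    (hφ : BddBelow (range φ)) (hψ : BddBelow (range ψ)) (h : ∀ i, |φ i - ψ i| ≤ c) :
    |(⨅ i, φ i) - ⨅ i, ψ i| ≤ c := by
  have hφψ : (⨅ i, φ i) - c ≤ ⨅ i, ψ i := le_ciInf fun i => by
    linarith [ciInf_le hφ i, (abs_le.1 (h i)).2]
  have hψφ : (⨅ i, ψ i) - c ≤ ⨅ i, φ i := le_ciInf fun i => by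
    linarith [ciInf_le hψ i, (abs_le.1 (h i)).1]
  exact abs_le.2 ⟨by linarith, by linarith⟩

theorem le_fderiv_of_eventually_add_mul_le {G : Type*} [NormedAddCommGroup G] [NormedSpace ℝ G]
    {v : G → ℝ} {z d : G} {r : ℝ → ℝ} {c : ℝ} (hv : DifferentiableAt ℝ v z)
    (hr : Tendsto r (𝓝[>] 0) (𝓝 c)) (h : ∀ᶠ s in 𝓝[>] 0, v z + s * r s ≤ v (z + s • d)) :
    c ≤ fderiv ℝ v z d := by
  have hline : HasDerivAt (fun s : ℝ => z + s • d) d 0 := by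
    simpa using ((hasDerivAt_id (0 : ℝ)).smul_const d).const_add z
  have hcomp : HasDerivAt (fun s : ℝ => v (z + s • d)) (fderiv ℝ v z d) 0 :=
    HasFDerivAt.comp_hasDerivAt (l := v) (0 : ℝ) (by simpa using hv.hasFDerivAt) hline
  have hslope := hcomp.tendsto_slope_zero_right
  simp only [zero_add, zero_smul, add_zero, smul_eq_mul] at hslope
  refine le_of_tendsto_of_tendsto hr hslope ?_
  filter_upwards [h, self_mem_nhdsWithin] with s hs hs0
  rw [inv_mul_eq_div, le_div_iff₀ hs0]
  linarith

section Mollification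

variable {G : Type*} [NormedAddCommGroup G] [NormedSpace ℝ G] [FiniteDimensional ℝ G]
  [MeasurableSpace G] [BorelSpace G]

theorem exists_isProbabilityMeasure_forall_contDiff_integral_sub {δ : ℝ} (hδ : 0 < δ) :
    ∃ ν : Measure G, IsProbabilityMeasure ν ∧ ν (Metric.closedBall 0 δ)ᶜ = 0 ∧
      ∀ W : G → ℝ, Continuous W → ContDiff ℝ 1 fun z => ∫ w, W (z - w) ∂ν := by
  let φ : ContDiffBump (0 : G) := ⟨δ / 2, δ, half_pos hδ, half_lt_self hδ⟩
  let μ : Measure G := Measure.addHaar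
  have hφ : Measurable (φ.normed μ) := φ.continuous_normed.measurable
  have hball : ∀ᵐ w ∂μ, w ∈ (Metric.closedBall 0 δ)ᶜ → φ.normed μ w = 0 := ae_of_all _ fun w hw =>
    Function.notMem_support.1 fun hsupp =>
      hw (Metric.ball_subset_closedBall (φ.support_normed_eq (μ := μ) ▸ hsupp))
  refine ⟨μ.withDensity fun w => ENNReal.ofReal (φ.normed μ w), ⟨?_⟩, ?_, fun W hW => ?_⟩
  · rw [withDensity_apply _ MeasurableSet.univ, setLIntegral_univ,
      ← ofReal_integral_eq_lintegral_ofReal φ.integrable_normed (ae_of_all _ φ.nonneg_normed),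
      φ.integral_normed, ENNReal.ofReal_one]
  · rw [withDensity_apply _ Metric.isClosed_closedBall.measurableSet.compl]
    refine (setLIntegral_congr_fun_ae Metric.isClosed_closedBall.measurableSet.compl
      (hball.mono fun w hw hwmem => ?_)).trans lintegral_zero
    rw [hw hwmem, ENNReal.ofReal_zero]
  · have hconv : (fun z => ∫ w, W (z - w) ∂μ.withDensity fun w => ENNReal.ofReal (φ.normed μ w))
        = convolution (φ.normed μ) W (ContinuousLinearMap.mul ℝ ℝ) μ := by
      ext z
      rw [integral_withDensity_eq_integral_toReal_smul hφ.ennreal_ofReal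
        (ae_of_all _ fun _ => ENNReal.ofReal_lt_top)]
      simp only [ENNReal.toReal_ofReal (φ.nonneg_normed _), smul_eq_mul, convolution_def,
        ContinuousLinearMap.mul_apply']
    rw [hconv]
    exact φ.hasCompactSupport_normed.contDiff_convolution_left (n := 1) _ φ.contDiff_normed
      hW.locallyIntegrable

end Mollification

/-- The data of an autonomous control system `ẏ = velocity a`, `a` ranging over the set `A` of
controls, whose running cost at the control `a` depends on the time-state point, together with a
terminal cost. There are no constraints on the state. -/
structure BolzaProblem (E A : Type*) where
  velocity : A → E
  runningCost : ℝ × E → A → ℝ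
  terminalCost : E → ℝ

namespace BolzaProblem

variable {E A : Type*} [NormedAddCommGroup E]

/-- Measurability, `C`-boundedness and `L`-Lipschitz continuity of the data of a Bolza problem, the
conditions under which its value function is finite and locally Lipschitz. -/
structure IsRegular [MeasurableSpace E] [MeasurableSpace A] (P : BolzaProblem E A) (C L : ℝ≥0) :
    Prop where
  measurable_velocity : Measurable P.velocity
  norm_velocity_le : ∀ a, ‖P.velocity a‖ ≤ C
  measurable_runningCost : Measurable (Function.uncurry P.runningCost)
  abs_runningCost_le : ∀ z a, |P.runningCost z a| ≤ C
  lipschitzWith_runningCost : ∀ a, LipschitzWith L fun z => P.runningCost z a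
  neg_le_terminalCost : ∀ y, -(C : ℝ) ≤ P.terminalCost y
  lipschitzWith_terminalCost : LipschitzWith L P.terminalCost

theorem IsRegular.intervalIntegrable_velocity [MeasurableSpace E] [BorelSpace E]
    [SecondCountableTopology E] [MeasurableSpace A] {P : BolzaProblem E A} {C L : ℝ≥0} {a : ℝ → A}
    (hP : P.IsRegular C L) (ha : Measurable a) (s t : ℝ) :
    IntervalIntegrable (fun r => P.velocity (a r)) volume s t :=
  (intervalIntegrable_const (c := (C : ℝ))).mono_fun
    (hP.measurable_velocity.comp ha).aestronglyMeasurable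
    (ae_of_all _ fun _ => (hP.norm_velocity_le _).trans (Real.le_norm_self _))

variable [NormedSpace ℝ E]

/-- The trajectory of the control `a` that passes through `z.2` at the time `z.1`. -/
def traj (P : BolzaProblem E A) (z : ℝ × E) (a : ℝ → A) (s : ℝ) : E :=
  z.2 + ∫ r in z.1..s, P.velocity (a r)

/-- The cost incurred by the control `a` between the time-state point `z` and the horizon `T`. -/
def cost (P : BolzaProblem E A) (T : ℝ) (z : ℝ × E) (a : ℝ → A) : ℝ :=
  (∫ s in z.1..T, P.runningCost (s, P.traj z a s) (a s)) + P.terminalCost (P.traj z a T)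

instance [MeasurableSpace A] [Nonempty A] : Nonempty {a : ℝ → A // Measurable a} :=
  ⟨⟨_, measurable_const (a := Classical.arbitrary A)⟩⟩

/-- The value function of the Bolza problem with horizon `T`: the infimum of the cost over all
measurable controls. -/
def value [MeasurableSpace A] (P : BolzaProblem E A) (T : ℝ) (z : ℝ × E) : ℝ :=
  ⨅ a : {a : ℝ → A // Measurable a}, P.cost T z a

variable {P : BolzaProblem E A} {C L : ℝ≥0} {T : ℝ} {z z' : ℝ × E} {a a' : ℝ → A} {s t : ℝ}

theorem value_horizon [MeasurableSpace A] [Nonempty A] (P : BolzaProblem E A) (T : ℝ) (y : E) :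
    P.value T (T, y) = P.terminalCost y := by
  simp only [value, cost, traj, intervalIntegral.integral_same, zero_add, add_zero, ciInf_const]

theorem traj_const [CompleteSpace E] (P : BolzaProblem E A) (z : ℝ × E) (b : A) (s : ℝ) :
    P.traj z (fun _ => b) s = z.2 + (s - z.1) • P.velocity b := by
  rw [traj, intervalIntegral.integral_const]

theorem traj_congr (haa' : EqOn a a' (uIoc z.1 s)) : P.traj z a s = P.traj z a' s := by
  rw [traj, traj, intervalIntegral.integral_congr_ae
    (ae_of_all _ fun r hr => congrArg P.velocity (haa' hr))]

theorem cost_congr (haa' : EqOn a a' (uIoc z.1 T)) : P.cost T z a = P.cost T z a' := by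
  rw [cost, cost, traj_congr haa']
  refine congrArg (· + _) (intervalIntegral.integral_congr_ae (ae_of_all _ fun r hr => ?_))
  have hsub : uIoc z.1 r ⊆ uIoc z.1 T :=
    uIoc_subset_uIoc_of_uIcc_subset_uIcc (uIcc_subset_uIcc_left (uIoc_subset_uIcc hr))
  rw [traj_congr (haa'.mono hsub), haa' hr]

namespace IsRegular

variable [MeasurableSpace E] [MeasurableSpace A]

theorem le_cost (hP : P.IsRegular C L) (T : ℝ) (z : ℝ × E) (a : ℝ → A) :
    -(C * |T - z.1| + C) ≤ P.cost T z a := by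
  have hint : ‖∫ s in z.1..T, P.runningCost (s, P.traj z a s) (a s)‖ ≤ C * |T - z.1| :=
    intervalIntegral.norm_integral_le_of_norm_le_const fun r _ => hP.abs_runningCost_le _ _
  rw [cost, neg_add]
  exact add_le_add (neg_le_of_abs_le hint) (hP.neg_le_terminalCost _)

theorem bddBelow_range_cost (hP : P.IsRegular C L) (T : ℝ) (z : ℝ × E) :
    BddBelow (range fun a : {a : ℝ → A // Measurable a} => P.cost T z a) :=
  ⟨_, forall_mem_range.2 fun a => hP.le_cost T z a⟩

theorem value_le_cost (hP : P.IsRegular C L) (T : ℝ) (z : ℝ × E) (ha : Measurable a) :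
    P.value T z ≤ P.cost T z a :=
  ciInf_le (hP.bddBelow_range_cost T z) ⟨a, ha⟩

variable [BorelSpace E] [SecondCountableTopology E]

theorem traj_traj (hP : P.IsRegular C L) (ha : Measurable a) (z : ℝ × E) (t s : ℝ) :
    P.traj (t, P.traj z a t) a s = P.traj z a s := by
  simp only [traj]
  rw [add_assoc, intervalIntegral.integral_add_adjacent_intervals
    (hP.intervalIntegrable_velocity ha _ _) (hP.intervalIntegrable_velocity ha _ _)]

theorem continuous_traj (hP : P.IsRegular C L) (ha : Measurable a) (z : ℝ × E) :
    Continuous (P.traj z a) :=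
  continuous_const.add
    (intervalIntegral.continuous_primitive (hP.intervalIntegrable_velocity ha) _)

theorem intervalIntegrable_runningCost (hP : P.IsRegular C L) (ha : Measurable a) (z : ℝ × E)
    (s t : ℝ) :
    IntervalIntegrable (fun r => P.runningCost (r, P.traj z a r) (a r)) volume s t := by
  have hmeas : Measurable fun r => ((r, P.traj z a r), a r) :=
    (measurable_id.prodMk (hP.continuous_traj ha z).measurable).prodMk ha
  exact (intervalIntegrable_const (c := (C : ℝ))).mono_fun
    (hP.measurable_runningCost.comp hmeas).aestronglyMeasurable
    (ae_of_all _ fun r => (hP.abs_runningCost_le _ _).trans (Real.le_norm_self _))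

theorem cost_eq_add_cost (hP : P.IsRegular C L) (ha : Measurable a) (z : ℝ × E) (T t : ℝ) :
    P.cost T z a = (∫ r in z.1..t, P.runningCost (r, P.traj z a r) (a r))
      + P.cost T (t, P.traj z a t) a := by
  simp only [cost, hP.traj_traj ha]
  rw [← add_assoc, intervalIntegral.integral_add_adjacent_intervals
    (hP.intervalIntegrable_runningCost ha _ _ _) (hP.intervalIntegrable_runningCost ha _ _ _)]

theorem norm_traj_sub_traj_le (hP : P.IsRegular C L) (ha : Measurable a) (z z' : ℝ × E) (s : ℝ) :
    ‖P.traj z a s - P.traj z' a s‖ ≤ (1 + C) * ‖z - z'‖ := by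
  have hz : P.traj z a s - P.traj z' a s = z.2 - z'.2 + ∫ r in z.1..z'.1, P.velocity (a r) := by
    rw [traj, traj, ← intervalIntegral.integral_add_adjacent_intervals
      (hP.intervalIntegrable_velocity ha z.1 z'.1) (hP.intervalIntegrable_velocity ha z'.1 s)]
    abel
  have hint : ‖∫ r in z.1..z'.1, P.velocity (a r)‖ ≤ C * |z'.1 - z.1| :=
    intervalIntegral.norm_integral_le_of_norm_le_const fun r _ => hP.norm_velocity_le _
  have hfst : |z'.1 - z.1| ≤ ‖z - z'‖ := abs_sub_comm z'.1 z.1 ▸ norm_fst_le (z - z')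
  calc ‖P.traj z a s - P.traj z' a s‖
      ≤ ‖z.2 - z'.2‖ + ‖∫ r in z.1..z'.1, P.velocity (a r)‖ := by
        rw [hz]
        exact norm_add_le _ _
    _ ≤ ‖z - z'‖ + C * ‖z - z'‖ :=
      add_le_add (norm_snd_le (z - z')) (hint.trans (by gcongr))
    _ = (1 + C) * ‖z - z'‖ := by ring

theorem abs_cost_sub_cost_le (hP : P.IsRegular C L) (ha : Measurable a) (T : ℝ) (z z' : ℝ × E) :
    |P.cost T z a - P.cost T z' a| ≤ (C + L * (|T - z'.1| + 1) * (1 + C)) * ‖z - z'‖ := by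
  have htraj := hP.norm_traj_sub_traj_le ha z z'
  set l : ℝ × E → ℝ → ℝ := fun w s => P.runningCost (s, P.traj w a s) (a s)
  have hintl : ∀ w b c, IntervalIntegrable (l w) volume b c :=
    hP.intervalIntegrable_runningCost ha
  have hstart : ‖∫ s in z.1..z'.1, l z s‖ ≤ C * |z'.1 - z.1| :=
    intervalIntegral.norm_integral_le_of_norm_le_const fun s _ => hP.abs_runningCost_le _ _
  have hrun : ‖∫ s in z'.1..T, (l z s - l z' s)‖ ≤ L * ((1 + C) * ‖z - z'‖) * |T - z'.1| := by
    refine intervalIntegral.norm_integral_le_of_norm_le_const fun s _ =>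
      ((hP.lipschitzWith_runningCost (a s)).norm_sub_le _ _).trans ?_
    rw [← dist_eq_norm, dist_prod_same_left, dist_eq_norm]
    gcongr
    exact htraj s
  have hterm : |P.terminalCost (P.traj z a T) - P.terminalCost (P.traj z' a T)|
      ≤ L * ((1 + C) * ‖z - z'‖) :=
    (hP.lipschitzWith_terminalCost.norm_sub_le _ _).trans (by gcongr; exact htraj T)
  have hsplit : P.cost T z a - P.cost T z' a = (∫ s in z.1..z'.1, l z s)
      + (∫ s in z'.1..T, (l z s - l z' s))
      + (P.terminalCost (P.traj z a T) - P.terminalCost (P.traj z' a T)) := by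
    rw [intervalIntegral.integral_sub (hintl _ _ _) (hintl _ _ _), cost, cost,
      ← intervalIntegral.integral_add_adjacent_intervals (hintl z z.1 z'.1) (hintl z z'.1 T)]
    ring
  have hfst : |z'.1 - z.1| ≤ ‖z - z'‖ := abs_sub_comm z'.1 z.1 ▸ norm_fst_le (z - z')
  calc |P.cost T z a - P.cost T z' a|
      ≤ C * |z'.1 - z.1| + L * ((1 + C) * ‖z - z'‖) * |T - z'.1|
        + L * ((1 + C) * ‖z - z'‖) := by
        rw [hsplit]
        exact (abs_add_three _ _ _).trans (add_le_add (add_le_add hstart hrun) hterm)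
    _ ≤ C * ‖z - z'‖ + L * ((1 + C) * ‖z - z'‖) * |T - z'.1| + L * ((1 + C) * ‖z - z'‖) := by
        gcongr
    _ = (C + L * (|T - z'.1| + 1) * (1 + C)) * ‖z - z'‖ := by ring

theorem abs_value_sub_value_le [Nonempty A] (hP : P.IsRegular C L) (T : ℝ) (z z' : ℝ × E) :
    |P.value T z - P.value T z'| ≤ (C + L * (|T - z'.1| + 1) * (1 + C)) * ‖z - z'‖ :=
  abs_ciInf_sub_ciInf_le (hP.bddBelow_range_cost T z) (hP.bddBelow_range_cost T z')
    fun a => hP.abs_cost_sub_cost_le a.2 T z z'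

theorem continuous_value [Nonempty A] (hP : P.IsRegular C L) (T : ℝ) : Continuous (P.value T) := by
  refine continuous_iff_continuousAt.2 fun z' => tendsto_iff_norm_sub_tendsto_zero.2 ?_
  refine squeeze_zero (fun _ => norm_nonneg _) (fun z => hP.abs_value_sub_value_le T z z') ?_
  have hcont : Continuous fun z => (C + L * (|T - z'.1| + 1) * (1 + C)) * ‖z - z'‖ := by fun_prop
  simpa only [sub_self, norm_zero, mul_zero] using hcont.tendsto z'

theorem value_le_integral_add_value [CompleteSpace E] (hP : P.IsRegular C L) (b : A) (hs : 0 ≤ s)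
    (hsT : z.1 + s ≤ T) :
    P.value T z ≤ (∫ r in z.1..z.1 + s, P.runningCost (r, z.2 + (r - z.1) • P.velocity b) b)
      + P.value T (z + s • (1, P.velocity b)) := by
  have : Nonempty A := ⟨b⟩
  rw [← sub_le_iff_le_add']
  refine le_ciInf fun ⟨a, ha⟩ => sub_le_iff_le_add'.2 ?_
  classical
  set c : ℝ → A := (Iic (z.1 + s)).piecewise (fun _ => b) a
  have hc_meas : Measurable c := measurable_const.piecewise measurableSet_Iic ha
  have hcb : ∀ r ≤ z.1 + s, c r = b := fun r hr => piecewise_eq_of_mem _ _ _ hr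
  have hca : EqOn c a (uIoc (z.1 + s) T) := fun r hr =>
    piecewise_eq_of_notMem _ _ _ (notMem_Iic.2 (uIoc_of_le hsT ▸ hr).1)
  have htraj : ∀ r ∈ Icc z.1 (z.1 + s), P.traj z c r = z.2 + (r - z.1) • P.velocity b :=
    fun r hr => (traj_congr fun q hq => hcb q ((uIoc_of_le hr.1 ▸ hq).2.trans hr.2)).trans
      (P.traj_const z b r)
  have hca' : P.cost T (z + s • (1, P.velocity b)) c = P.cost T (z + s • (1, P.velocity b)) a :=
    cost_congr (by simpa only [Prod.fst_add, Prod.smul_fst, smul_eq_mul, mul_one] using hca)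
  have hend : (z.1 + s, P.traj z c (z.1 + s)) = z + s • (1, P.velocity b) := by
    rw [htraj _ ⟨by linarith, le_rfl⟩, add_sub_cancel_left]
    exact Prod.ext (by simp) rfl
  have hrun : ∫ r in z.1..z.1 + s, P.runningCost (r, P.traj z c r) (c r)
      = ∫ r in z.1..z.1 + s, P.runningCost (r, z.2 + (r - z.1) • P.velocity b) b :=
    intervalIntegral.integral_congr fun r hr => by
      rw [uIcc_of_le (by linarith)] at hr
      rw [htraj r hr, hcb r hr.2]
  calc P.value T z ≤ P.cost T z c := hP.value_le_cost T z hc_meas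
    _ = _ := by rw [hP.cost_eq_add_cost hc_meas z T (z.1 + s), hrun, hend, hca']

theorem value_le_mul_add_value [CompleteSpace E] (hP : P.IsRegular C L) (b : A) (hs : 0 ≤ s)
    (hsT : z.1 + s ≤ T) :
    P.value T z ≤ s * (P.runningCost z b + L * ((1 + C) * s))
      + P.value T (z + s • (1, P.velocity b)) := by
  refine (hP.value_le_integral_add_value b hs hsT).trans (add_le_add_left ?_ _)
  have hline : Measurable fun r : ℝ => ((r, z.2 + (r - z.1) • P.velocity b), b) := by fun_prop
  have hint : IntervalIntegrable
      (fun r => P.runningCost (r, z.2 + (r - z.1) • P.velocity b) b) volume z.1 (z.1 + s) :=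
    (intervalIntegrable_const (c := (C : ℝ))).mono_fun
      (hP.measurable_runningCost.comp hline).aestronglyMeasurable
      (ae_of_all _ fun r => (hP.abs_runningCost_le _ _).trans (Real.le_norm_self _))
  have hbound : ∀ r ∈ Icc z.1 (z.1 + s), P.runningCost (r, z.2 + (r - z.1) • P.velocity b) b
      ≤ P.runningCost z b + L * ((1 + C) * s) := fun r hr => by
    have hr0 : |r - z.1| ≤ s := abs_le.2 ⟨by linarith [hr.1], by linarith [hr.2]⟩
    have hdist : dist (r, z.2 + (r - z.1) • P.velocity b) z ≤ (1 + C) * s := by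
      refine max_le ?_ ?_
      · rw [Real.dist_eq]
        nlinarith [C.2]
      · rw [dist_self_add_left, norm_smul, Real.norm_eq_abs]
        nlinarith [hP.norm_velocity_le b, abs_nonneg (r - z.1), C.2]
    have hle := (le_abs_self _).trans ((hP.lipschitzWith_runningCost b).dist_le_mul_of_le hdist)
    linarith
  calc ∫ r in z.1..z.1 + s, P.runningCost (r, z.2 + (r - z.1) • P.velocity b) b
      ≤ ∫ _ in z.1..z.1 + s, (P.runningCost z b + L * ((1 + C) * s)) :=
        intervalIntegral.integral_mono_on (by linarith) hint intervalIntegrable_const hbound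
    _ = s * (P.runningCost z b + L * ((1 + C) * s)) := by
        rw [intervalIntegral.integral_const, add_sub_cancel_left, smul_eq_mul]

end IsRegular

end BolzaProblem

theorem integral_add_le_integral_of_forall_mem {α : Type*} [TopologicalSpace α] [T2Space α]
    [MeasurableSpace α] [BorelSpace α] {ν : Measure α} [IsProbabilityMeasure ν] {K : Set α}
    (hK : IsCompact K) (hν : ν Kᶜ = 0) {φ ψ : α → ℝ} (hφ : ContinuousOn φ K)
    (hψ : ContinuousOn ψ K) {c : ℝ} (h : ∀ w ∈ K, φ w + c ≤ ψ w) :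
    ∫ w, φ w ∂ν + c ≤ ∫ w, ψ w ∂ν := by
  have hmem : ∀ᵐ w ∂ν, w ∈ K := (measure_eq_zero_iff_ae_notMem.1 hν).mono fun _ => not_not.1
  have hφ_int := integrable_of_continuousOn_of_isCompact hK hν hφ
  calc ∫ w, φ w ∂ν + c = ∫ w, (φ w + c) ∂ν := by
        rw [integral_add hφ_int (integrable_const c), integral_const, probReal_univ, one_smul]
    _ ≤ ∫ w, ψ w ∂ν := integral_mono_ae (hφ_int.add (integrable_const c))
        (integrable_of_continuousOn_of_isCompact hK hν hψ) (hmem.mono h)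

namespace BolzaProblem

variable {E A : Type*} [NormedAddCommGroup E]

theorem norm_add_shift_le {δ : ℝ} {w : ℝ × E} (hδ : 0 ≤ δ) (hw : w ∈ Metric.closedBall 0 δ) :
    ‖w + (2 * δ, 0)‖ ≤ 3 * δ := by
  have hshift : ‖((2 * δ, 0) : ℝ × E)‖ ≤ 2 * δ :=
    max_le (by rw [Real.norm_of_nonneg (by positivity)]) (by simpa using hδ)
  linarith [norm_add_le w (2 * δ, 0), mem_closedBall_zero_iff.1 hw]

variable [NormedSpace ℝ E] [MeasurableSpace E] [MeasurableSpace A]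

/-- The value function, averaged with respect to `ν` after being moved back in time by `2 * δ`. If
`ν` lives on the ball of radius `δ`, the value function is thereby only evaluated at times at most
`T - δ`, where the dynamic programming inequality is available. -/
def mollifiedValue (P : BolzaProblem E A) (T δ : ℝ) (ν : Measure (ℝ × E))
    (z : ℝ × E) : ℝ :=
  ∫ w, P.value T (z - w - (2 * δ, 0)) ∂ν

namespace IsRegular

variable [FiniteDimensional ℝ E] [BorelSpace E] [Nonempty A] {P : BolzaProblem E A} {C L : ℝ≥0}
  {T δ : ℝ} {ν : Measure (ℝ × E)} [IsProbabilityMeasure ν] {z : ℝ × E}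

theorem abs_mollifiedValue_sub_value_le (hP : P.IsRegular C L) (hδ : 0 ≤ δ)
    (hν : ν (Metric.closedBall 0 δ)ᶜ = 0) (z : ℝ × E) :
    |P.mollifiedValue T δ ν z - P.value T z|
      ≤ (C + L * (|T - z.1| + 1) * (1 + C)) * (3 * δ) := by
  have hK : IsCompact (Metric.closedBall (0 : ℝ × E) δ) := isCompact_closedBall _ _
  have hval := hP.continuous_value T
  have hmem : ∀ᵐ w ∂ν, w ∈ Metric.closedBall 0 δ :=
    (measure_eq_zero_iff_ae_notMem.1 hν).mono fun _ => not_not.1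
  have hint : Integrable (fun w => P.value T (z - w - (2 * δ, 0))) ν :=
    integrable_of_continuousOn_of_isCompact hK hν (by fun_prop)
  have hconst : P.value T z = ∫ _, P.value T z ∂ν := by
    rw [integral_const, probReal_univ, one_smul]
  have hbound : ∀ᵐ w ∂ν, ‖P.value T (z - w - (2 * δ, 0)) - P.value T z‖
      ≤ (C + L * (|T - z.1| + 1) * (1 + C)) * (3 * δ) := hmem.mono fun w hw => by
    refine (hP.abs_value_sub_value_le T _ z).trans ?_
    rw [sub_sub z, sub_sub_cancel_left, norm_neg]
    gcongr
    exact norm_add_shift_le hδ hw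
  rw [mollifiedValue, hconst, ← integral_sub hint (integrable_const _)]
  simpa only [probReal_univ, mul_one, Real.norm_eq_abs] using
    norm_integral_le_of_norm_le_const hbound

theorem mollifiedValue_add_le (hP : P.IsRegular C L) (hδ : 0 ≤ δ)
    (hν : ν (Metric.closedBall 0 δ)ᶜ = 0) (hzT : z.1 ≤ T) (b : A) {s : ℝ} (hs : s ∈ Icc 0 δ) :
    P.mollifiedValue T δ ν z
        + s * -(P.runningCost z b + L * (3 * δ) + L * ((1 + C) * s))
      ≤ P.mollifiedValue T δ ν (z + s • (1, P.velocity b)) := by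
  have hval := hP.continuous_value T
  refine integral_add_le_integral_of_forall_mem (isCompact_closedBall _ _) hν (by fun_prop)
    (by fun_prop) fun w hw => ?_
  have hw1 : -w.1 ≤ δ := (neg_le_abs _).trans
    ((norm_fst_le w).trans (mem_closedBall_zero_iff.1 hw))
  have hdpp := hP.value_le_mul_add_value (z := z - w - (2 * δ, 0)) b hs.1 (T := T) <| by
    simp only [Prod.fst_sub]
    linarith [hs.2]
  have hdist : dist (z - w - (2 * δ, 0)) z ≤ 3 * δ := by
    rw [sub_sub, dist_self_sub_left]
    exact norm_add_shift_le hδ hw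
  have hrun := mul_le_mul_of_nonneg_left ((le_abs_self _).trans
    ((hP.lipschitzWith_runningCost b).dist_le_mul_of_le hdist)) hs.1
  have hpt : z + s • (1, P.velocity b) - w - (2 * δ, 0)
      = z - w - (2 * δ, 0) + s • (1, P.velocity b) := by abel
  rw [hpt]
  linarith

theorem neg_le_fderiv_mollifiedValue (hP : P.IsRegular C L) (hδ : 0 < δ)
    (hν : ν (Metric.closedBall 0 δ)ᶜ = 0) (hdiff : DifferentiableAt ℝ (P.mollifiedValue T δ ν) z)
    (hzT : z.1 ≤ T) (b : A) :
    -(L * (3 * δ))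
      ≤ fderiv ℝ (P.mollifiedValue T δ ν) z (1, P.velocity b) + P.runningCost z b := by
  have hlim : Tendsto (fun s : ℝ => -(P.runningCost z b + L * (3 * δ) + L * ((1 + C) * s)))
      (𝓝[>] 0) (𝓝 (-(P.runningCost z b + L * (3 * δ)))) := by
    have hcont : Continuous fun s : ℝ =>
      -(P.runningCost z b + L * (3 * δ) + L * ((1 + C) * s)) := by fun_prop
    simpa only [mul_zero, add_zero] using (hcont.tendsto 0).mono_left nhdsWithin_le_nhds
  have hle := le_fderiv_of_eventually_add_mul_le hdiff hlim <| by
    filter_upwards [Ioc_mem_nhdsGT hδ] with s hs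
    exact hP.mollifiedValue_add_le hδ.le hν hzT b (Ioc_subset_Icc_self hs)
  linarith

theorem exists_contDiff_subsolution (hP : P.IsRegular C L) (hT : 0 ≤ T) (y₀ : E) {ε : ℝ}
    (hε : 0 < ε) :
    ∃ v : ℝ × E → ℝ, ContDiff ℝ 1 v ∧
      (∀ z b, z.1 ≤ T → -ε ≤ fderiv ℝ v z (1, P.velocity b) + P.runningCost z b) ∧
      (∀ y, v (T, y) ≤ P.terminalCost y + ε) ∧ P.value T (0, y₀) - ε ≤ v (0, y₀) := by
  set M : ℝ := C + L * (T + 1) * (1 + C) with hM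
  have hM0 : 0 ≤ M := by positivity
  set δ : ℝ := ε / (3 * (M + L + 1)) with hδ
  have hδ0 : 0 < δ := by positivity
  have hδε : (M + L + 1) * (3 * δ) = ε := by rw [hδ]; field_simp
  have hMδ : M * (3 * δ) ≤ ε := by nlinarith [L.2]
  have hLδ : L * (3 * δ) ≤ ε := by nlinarith
  obtain ⟨ν, hνprob, hν, hsmooth⟩ :=
    exists_isProbabilityMeasure_forall_contDiff_integral_sub (G := ℝ × E) hδ0
  have hval := hP.continuous_value T
  have hv : ContDiff ℝ 1 (P.mollifiedValue T δ ν) :=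
    hsmooth (fun z => P.value T (z - (2 * δ, 0))) (by fun_prop)
  refine ⟨_, hv, fun z b hz => (neg_le_neg hLδ).trans (hP.neg_le_fderiv_mollifiedValue hδ0 hν
    (hv.differentiable one_ne_zero z) hz b), fun y => ?_, ?_⟩
  · have habs := hP.abs_mollifiedValue_sub_value_le (T := T) hδ0.le hν (T, y)
    rw [P.value_horizon, sub_self, abs_zero] at habs
    have hle : (C + L * (0 + 1) * (1 + C)) * (3 * δ) ≤ M * (3 * δ) := by rw [hM]; gcongr
    linarith [(abs_le.1 habs).2]
  · have habs := hP.abs_mollifiedValue_sub_value_le (T := T) hδ0.le hν (0, y₀)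
    rw [sub_zero, abs_of_nonneg hT] at habs
    linarith [(abs_le.1 habs).1]

end IsRegular

end BolzaProblem

/-! ### Penalization of the constraints -/

theorem lipschitzWith_mul_min_one_norm_sub {G : Type*} [SeminormedAddCommGroup G] (N : ℝ≥0)
    (q : G) : LipschitzWith N fun z => (N : ℝ) * min 1 ‖z - q‖ := by
  have hmin : LipschitzWith 1 fun z : G => min 1 ‖z - q‖ := by
    simpa only [dist_eq_norm] using (LipschitzWith.dist_left q).const_min 1
  refine LipschitzWith.of_dist_le_mul fun z z' => ?_
  rw [Real.dist_eq, ← mul_sub, abs_mul, NNReal.abs_eq]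
  gcongr
  simpa only [Real.dist_eq, NNReal.coe_one, one_mul] using hmin.dist_le_mul z z'

section Penalization

variable {E V : Type*} [NormedAddCommGroup E]

/-- The unconstrained relaxation of the problem of minimizing `∫ h (t, x, u) dt + H (x T)` over the
solutions of `ẋ = F (t, x, u)` with `(t, x, u) ∈ K` and `x T ∈ XT`. A control is a curve
`(τ, ξ, u)` in `K` that drives the state by `F (τ, ξ, u)`; the deviation of `(τ, ξ)` from the actual
time and state and that of the final state from `XT` are penalized with weight `N`. -/
def penalizedProblem (K : Set (ℝ × E × V)) (XT : Set E) (F : ℝ × E × V → E)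
    (h : ℝ × E × V → ℝ) (H : E → ℝ) (N : ℝ≥0) : BolzaProblem E K where
  velocity a := F a
  runningCost z a := h a + N * min 1 ‖z - (a.1.1, a.1.2.1)‖
  terminalCost y := ⨅ p : XT, (H p + N * min 1 ‖y - p‖)

theorem penalizedProblem_terminalCost_le {K : Set (ℝ × E × V)} {XT : Set E} {F : ℝ × E × V → E}
    {h : ℝ × E × V → ℝ} {H : E → ℝ} (hH : BddBelow (H '' XT)) (N : ℝ≥0) {y : E} (hy : y ∈ XT) :
    (penalizedProblem K XT F h H N).terminalCost y ≤ H y := by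
  obtain ⟨C, hC⟩ := hH
  have hbdd : BddBelow (range fun p : XT => H p + N * min 1 ‖y - p.1‖) :=
    ⟨C, forall_mem_range.2 fun p =>
      (hC (mem_image_of_mem H p.2)).trans (le_add_of_nonneg_right (by positivity))⟩
  simpa [penalizedProblem] using ciInf_le hbdd ⟨y, hy⟩

variable [SecondCountableTopology E] [MeasurableSpace E] [BorelSpace E]
  [TopologicalSpace V] [SecondCountableTopology V] [MeasurableSpace V] [BorelSpace V]
  {K : Set (ℝ × E × V)} {XT : Set E} {F : ℝ × E × V → E} {h : ℝ × E × V → ℝ} {H : E → ℝ}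

theorem isRegular_penalizedProblem (hF : ContinuousOn F K) (hh : ContinuousOn h K)
    (hXT : XT.Nonempty) {C : ℝ≥0} (hFC : ∀ z ∈ K, ‖F z‖ ≤ C) (hhC : ∀ z ∈ K, |h z| ≤ C)
    (hHC : ∀ p ∈ XT, |H p| ≤ C) (N : ℝ≥0) :
    (penalizedProblem K XT F h H N).IsRegular (C + N) N := by
  have : Nonempty XT := hXT.to_subtype
  have hC : (C : ℝ) ≤ (C + N : ℝ≥0) := NNReal.coe_le_coe.2 le_self_add
  have hpen : ∀ r : ℝ, 0 ≤ r → 0 ≤ N * min 1 r := fun r hr => by positivity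
  have hpen1 : ∀ r : ℝ, N * min 1 r ≤ N := fun r =>
    mul_le_of_le_one_right N.2 (min_le_left _ _)
  have hterm : ∀ (y : E) (p : XT), -(C : ℝ) ≤ H p + N * min 1 ‖y - p.1‖ := fun y p => by
    linarith [(abs_le.1 (hHC p p.2)).1, hpen _ (norm_nonneg (y - p.1))]
  have hbdd : ∀ y, BddBelow (range fun p : XT => H p + N * min 1 ‖y - p.1‖) := fun y =>
    ⟨_, forall_mem_range.2 (hterm y)⟩
  refine ⟨hF.domRestrict.measurable, fun a => (hFC a a.2).trans hC, ?_, fun z a => ?_, fun a => ?_,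
    fun y => (neg_le_neg hC).trans (le_ciInf (hterm y)), ?_⟩
  · have hh' : Measurable fun a : K => h a := hh.domRestrict.measurable
    have hdev : Measurable fun z : (ℝ × E) × K => ‖z.1 - (z.2.1.1, z.2.1.2.1)‖ := by fun_prop
    exact (hh'.comp measurable_snd).add ((hdev.const_inf 1).const_mul _)
  · refine (abs_add_le _ _).trans ?_
    rw [abs_of_nonneg (hpen _ (norm_nonneg _)), NNReal.coe_add]
    exact add_le_add (hhC a a.2) (hpen1 _)
  · have := (LipschitzWith.const (h a)).add
      (lipschitzWith_mul_min_one_norm_sub N ((a : ℝ × E × V).1, (a : ℝ × E × V).2.1))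
    rwa [zero_add] at this
  · refine LipschitzWith.of_dist_le_mul fun y y' => ?_
    refine abs_ciInf_sub_ciInf_le (hbdd y) (hbdd y') fun p => ?_
    rw [add_sub_add_left_eq_sub]
    exact (lipschitzWith_mul_min_one_norm_sub N p.1).dist_le_mul y y'

variable [NormedSpace ℝ E]

/-- The curve with velocity `b` that starts at `x₀` at time `0`. -/
def integralCurve (x₀ : E) (b : ℝ → E) (s : ℝ) : E :=
  x₀ + ∫ r in (0 : ℝ)..s, b r

/-- Controls `a k` of the penalized problems and terminal points `p k` of `XT` for which the
penalties tend to zero and the unpenalized costs have a limit superior of at most `c`. The distance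
is truncated at `1` as in `penalizedProblem`. -/
structure IsApproximatingSequence (K : Set (ℝ × E × V)) (XT : Set E) (F : ℝ × E × V → E)
    (h : ℝ × E × V → ℝ) (H : E → ℝ) (T : ℝ) (x₀ : E) (c : ℝ) (a : ℕ → ℝ → ℝ × E × V)
    (p : ℕ → E) : Prop where
  measurable : ∀ k, Measurable (a k)
  mem : ∀ k s, a k s ∈ K
  terminal_mem : ∀ k, p k ∈ XT
  cost_le : ∀ k : ℕ, (∫ s in (0 : ℝ)..T, h (a k s)) + H (p k) ≤ c + 1 / (k + 1)
  tendsto_deviation : Tendsto (fun k => ∫ s in (0 : ℝ)..T,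
    min 1 ‖(s, integralCurve x₀ (fun r => F (a k r)) s) - ((a k s).1, (a k s).2.1)‖) atTop (𝓝 0)
  tendsto_terminal_deviation :
    Tendsto (fun k => min 1 ‖integralCurve x₀ (fun r => F (a k r)) T - p k‖) atTop (𝓝 0)

theorem exists_penalizedCost_lt (hF : ContinuousOn F K) (hh : ContinuousOn h K)
    (hK : K.Nonempty) (hXT : XT.Nonempty) {C : ℝ≥0} (hFC : ∀ z ∈ K, ‖F z‖ ≤ C)
    (hhC : ∀ z ∈ K, |h z| ≤ C) (hHC : ∀ p ∈ XT, |H p| ≤ C) {N : ℝ≥0} {T c : ℝ} {x₀ : E}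
    (hc : (penalizedProblem K XT F h H N).value T (0, x₀) < c) :
    ∃ a : ℝ → ℝ × E × V, Measurable a ∧ (∀ s, a s ∈ K) ∧ ∃ p ∈ XT,
      (∫ s in (0 : ℝ)..T, h (a s)) + H p + N * ((∫ s in (0 : ℝ)..T,
        min 1 ‖(s, integralCurve x₀ (fun r => F (a r)) s) - ((a s).1, (a s).2.1)‖)
          + min 1 ‖integralCurve x₀ (fun r => F (a r)) T - p‖) < c := by
  have : Nonempty K := hK.to_subtype
  have : Nonempty XT := hXT.to_subtype
  have hP := isRegular_penalizedProblem hF hh hXT hFC hhC hHC N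
  obtain ⟨⟨a, ha⟩, hac⟩ := exists_lt_of_ciInf_lt hc
  obtain ⟨p, hp⟩ := exists_lt_of_ciInf_lt (lt_sub_iff_add_lt'.2 hac)
  refine ⟨fun s => a s, measurable_subtype_coe.comp ha, fun s => (a s).2, p, p.2, ?_⟩
  set d : ℝ → ℝ := fun s =>
    min 1 ‖(s, integralCurve x₀ (fun r => F (a r)) s) - ((a s).1.1, (a s).1.2.1)‖
  have hrun := hP.intervalIntegrable_runningCost ha (0, x₀) 0 T
  have hh_int : IntervalIntegrable (fun s => h (a s)) volume 0 T := by
    have hmeas : Measurable fun s => h (a s) := hh.domRestrict.measurable.comp ha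
    exact (intervalIntegrable_const (c := (C : ℝ))).mono_fun hmeas.aestronglyMeasurable
      (ae_of_all _ fun s => (hhC _ (a s).2).trans (Real.le_norm_self _))
  have hd_int : IntervalIntegrable (fun s => N * d s) volume 0 T :=
    (hrun.sub hh_int).congr fun s _ => add_sub_cancel_left _ _
  have hsplit : ∫ s in (0 : ℝ)..T, (penalizedProblem K XT F h H N).runningCost
      (s, (penalizedProblem K XT F h H N).traj (0, x₀) a s) (a s)
      = (∫ s in (0 : ℝ)..T, h (a s)) + N * ∫ s in (0 : ℝ)..T, d s := by
    rw [← intervalIntegral.integral_const_mul, ← intervalIntegral.integral_add hh_int hd_int]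
    rfl
  rw [hsplit] at hp
  calc _ = H p + N * min 1 ‖integralCurve x₀ (fun r => F (a r)) T - p‖
        + ((∫ s in (0 : ℝ)..T, h (a s)) + N * ∫ s in (0 : ℝ)..T, d s) := by ring
    _ < c := lt_sub_iff_add_lt.1 hp

theorem exists_isApproximatingSequence (hF : ContinuousOn F K) (hh : ContinuousOn h K)
    (hK : K.Nonempty) (hXT : XT.Nonempty) {C : ℝ≥0} (hFC : ∀ z ∈ K, ‖F z‖ ≤ C)
    (hhC : ∀ z ∈ K, |h z| ≤ C) (hHC : ∀ p ∈ XT, |H p| ≤ C) {T c : ℝ} (hT : 0 ≤ T) {x₀ : E}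
    (hc : ∀ N : ℝ≥0, (penalizedProblem K XT F h H N).value T (0, x₀) ≤ c) :
    ∃ a p, IsApproximatingSequence K XT F h H T x₀ c a p := by
  have hck : ∀ k : ℕ, (penalizedProblem K XT F h H (k + 1)).value T (0, x₀)
      < c + 1 / (k + 1) := fun k => (hc _).trans_lt (lt_add_of_pos_right c Nat.one_div_pos_of_nat)
  choose a ha haK p hp hlt using fun k =>
    exists_penalizedCost_lt hF hh hK hXT hFC hhC hHC (hck k)
  set I : ℕ → ℝ := fun k => ∫ s in (0 : ℝ)..T,
    min 1 ‖(s, integralCurve x₀ (fun r => F (a k r)) s) - ((a k s).1, (a k s).2.1)‖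
  set J : ℕ → ℝ := fun k => min 1 ‖integralCurve x₀ (fun r => F (a k r)) T - p k‖
  have hI : ∀ k, 0 ≤ I k := fun k =>
    intervalIntegral.integral_nonneg hT fun s _ => le_min zero_le_one (norm_nonneg _)
  have hJ : ∀ k, 0 ≤ J k := fun k => le_min zero_le_one (norm_nonneg _)
  have hlow : ∀ k, -(C * T + C) ≤ (∫ s in (0 : ℝ)..T, h (a k s)) + H (p k) := fun k => by
    have hint : ‖∫ s in (0 : ℝ)..T, h (a k s)‖ ≤ C * T := by
      simpa only [sub_zero, abs_of_nonneg hT] using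
        intervalIntegral.norm_integral_le_of_norm_le_const (a := 0) (b := T)
          (f := fun s => h (a k s)) fun s _ => hhC _ (haK k s)
    linarith [(abs_le.1 hint).1, (abs_le.1 (hHC _ (hp k))).1]
  have hsum : ∀ k : ℕ, I k + J k ≤ (c + 1 + C * T + C) * (1 / (k + 1)) := fun k => by
    have hk : (1 : ℝ) / (k + 1) ≤ 1 := (div_le_one k.cast_add_one_pos).2 (by simp)
    rw [mul_one_div, le_div_iff₀' k.cast_add_one_pos]
    have := hlt k
    push_cast at this
    linarith [hlow k]
  have hlim : Tendsto (fun k : ℕ => (c + 1 + C * T + C) * (1 / ((k : ℝ) + 1))) atTop (𝓝 0) := by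
    rw [← mul_zero (c + 1 + C * T + C)]
    exact tendsto_one_div_add_atTop_nhds_zero_nat.const_mul _
  refine ⟨a, p, ha, haK, hp, fun k => le_of_add_le_of_nonneg_left (hlt k).le ?_,
    squeeze_zero hI (fun k => ?_) hlim, squeeze_zero hJ (fun k => ?_) hlim⟩
  · exact mul_nonneg (NNReal.coe_nonneg _) (add_nonneg (hI k) (hJ k))
  · exact (le_add_of_nonneg_right (hJ k)).trans (hsum k)
  · exact (le_add_of_nonneg_left (hI k)).trans (hsum k)

end Penalization

section LowerBound

variable {n m : ℕ} {T : ℝ} {X XT : Set (Fin n → ℝ)} {x₀ : Fin n → ℝ}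
  {f : ℝ × (Fin n → ℝ) → Fin n → ℝ} {g : ℝ × (Fin n → ℝ) → Fin n → Fin m → ℝ}
  {h : ℝ × (Fin n → ℝ) × (Fin m → ℝ) → ℝ} {H : (Fin n → ℝ) → ℝ}
  {η : Measure (ℝ × (Fin n → ℝ) × (Fin m → ℝ))} {ηT : Measure (Fin n → ℝ)}

theorem QFeasible.measureReal_terminal (hη : QFeasible T X XT x₀ f g η ηT) :
    ηT.real univ = 1 := by
  have := hη.2.2.2.2 (fun _ => 1) contDiff_const
  simpa [LFop_eq_fderiv] using this.symm

theorem QFeasible.measureReal_occupation (hη : QFeasible T X XT x₀ f g η ηT) :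
    η.real univ = T := by
  have := hη.2.2.2.2 Prod.fst contDiff_fst
  simpa [LFop_eq_fderiv, fderiv_fst, hη.measureReal_terminal] using this

theorem QFeasible.nonempty_terminal (hη : QFeasible T X XT x₀ f g η ηT) : XT.Nonempty := by
  rw [nonempty_iff_ne_empty]
  rintro rfl
  have hzero := hη.2.2.2.1
  rw [compl_empty] at hzero
  simpa [measureReal_def, hzero] using hη.measureReal_terminal

theorem QFeasible.nonempty_domain (hη : QFeasible T X XT x₀ f g η ηT) (hT : 0 < T) :
    (Icc (0 : ℝ) T ×ˢ X ×ˢ Ubox m).Nonempty := by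
  rw [nonempty_iff_ne_empty]
  intro hempty
  have hzero := hη.2.2.1
  rw [hempty, compl_empty] at hzero
  simpa [measureReal_def, hzero, hT.ne] using hη.measureReal_occupation

theorem QFeasible.apply_le_Qcost_add (hη : QFeasible T X XT x₀ f g η ηT) (hX : IsCompact X)
    (hXT : IsCompact XT) (hf : ContinuousOn f (Icc (0 : ℝ) T ×ˢ X))
    (hg : ContinuousOn g (Icc (0 : ℝ) T ×ˢ X))
    (hh : ContinuousOn h (Icc (0 : ℝ) T ×ˢ X ×ˢ Ubox m)) (hH : ContinuousOn H XT)
    {v : ℝ × (Fin n → ℝ) → ℝ} (hv : ContDiff ℝ 1 v) {ε : ℝ}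
    (hrun : ∀ z ∈ Icc (0 : ℝ) T ×ˢ X ×ˢ Ubox m, -ε ≤ LFop f g v z + h z)
    (hterm : ∀ y ∈ XT, v (T, y) ≤ H y + ε) :
    v (0, x₀) ≤ Qcost h H η ηT + ε * (T + 1) := by
  have := hη.1
  have := hη.2.1
  have hK := isCompact_Icc_prod_prod_Ubox hX m T
  have hL_int := integrable_of_continuousOn_of_isCompact hK hη.2.2.1
    (continuousOn_LFop hf hg (fun z hz => ⟨hz.1, hz.2.1⟩) hv)
  have hh_int := integrable_of_continuousOn_of_isCompact hK hη.2.2.1 hh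
  have hH_int := integrable_of_continuousOn_of_isCompact hXT hη.2.2.2.1 hH
  have hv_int := integrable_of_continuousOn_of_isCompact hXT hη.2.2.2.1
    (hv.continuous.comp (Continuous.prodMk_right T)).continuousOn
  have hocc : -ε * T ≤ ∫ z, LFop f g v z ∂η + ∫ z, h z ∂η := by
    rw [← integral_add hL_int hh_int]
    calc -ε * T = ∫ _, -ε ∂η := by
          rw [integral_const, hη.measureReal_occupation, smul_eq_mul, mul_comm]
      _ ≤ _ := integral_mono_ae (integrable_const _) (hL_int.add hh_int) (hη.ae_mem.mono hrun)
  have hXT_ae : ∀ᵐ y ∂ηT, y ∈ XT :=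
    (measure_eq_zero_iff_ae_notMem.1 hη.2.2.2.1).mono fun _ => not_not.1
  have hfin : ∫ y, v (T, y) ∂ηT ≤ ∫ y, H y ∂ηT + ε := by
    calc ∫ y, v (T, y) ∂ηT ≤ ∫ y, (H y + ε) ∂ηT :=
          integral_mono_ae hv_int (hH_int.add (integrable_const ε)) (hXT_ae.mono hterm)
      _ = ∫ y, H y ∂ηT + ε := by
          rw [integral_add hH_int (integrable_const ε), integral_const,
            hη.measureReal_terminal, one_smul]
  rw [Qcost]
  linarith [hη.2.2.2.2 v hv]

theorem QFeasible.value_penalizedProblem_le_Qcost (hη : QFeasible T X XT x₀ f g η ηT)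
    (hT : 0 < T) (hX : IsCompact X) (hXT : IsCompact XT)
    (hf : ContinuousOn f (Icc (0 : ℝ) T ×ˢ X)) (hg : ContinuousOn g (Icc (0 : ℝ) T ×ˢ X))
    (hh : ContinuousOn h (Icc (0 : ℝ) T ×ˢ X ×ˢ Ubox m)) (hH : ContinuousOn H XT) {C L N : ℝ≥0}
    (hP : (penalizedProblem (Icc (0 : ℝ) T ×ˢ X ×ˢ Ubox m) XT (Fvec f g) h H N).IsRegular C L) :
    (penalizedProblem (Icc (0 : ℝ) T ×ˢ X ×ˢ Ubox m) XT (Fvec f g) h H N).value T (0, x₀)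
      ≤ Qcost h H η ηT := by
  have : Nonempty (Icc (0 : ℝ) T ×ˢ X ×ˢ Ubox m) := (hη.nonempty_domain hT).to_subtype
  refine le_of_forall_pos_le_add fun ε hε => ?_
  obtain ⟨v, hv, hrun, hterm, hval⟩ :=
    hP.exists_contDiff_subsolution hT.le x₀ (ε := ε / (T + 2)) (by positivity)
  have hle := hη.apply_le_Qcost_add hX hXT hf hg hh hH hv (ε := ε / (T + 2)) (fun a ha => by
    simpa [penalizedProblem, LFop_eq_fderiv] using hrun (a.1, a.2.1) ⟨a, ha⟩ ha.1.2)
    fun y hy => (hterm y).trans (add_le_add_left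
      (penalizedProblem_terminalCost_le (hXT.image_of_continuousOn hH).bddBelow N hy) _)
  have : ε / (T + 2) * (T + 1) + ε / (T + 2) = ε := by field_simp; ring
  linarith

end LowerBound

/-! ### Compactness of approximating sequences -/

section Compactness

theorem tendsto_zero_of_tendsto_min_one_norm {ι G : Type*} [SeminormedAddCommGroup G]
    {l : Filter ι} {w : ι → G} (hw : Tendsto (fun i => min 1 ‖w i‖) l (𝓝 0)) :
    Tendsto w l (𝓝 0) := by
  refine tendsto_zero_iff_norm_tendsto_zero.2 (hw.congr' ?_)
  filter_upwards [hw.eventually_lt_const one_pos] with i hi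
  exact min_eq_right ((min_lt_iff.1 hi).resolve_left (lt_irrefl 1)).le

theorem exists_subseq_ae_tendsto_zero {α : Type*} [MeasurableSpace α] {μ : Measure α}
    {d : ℕ → α → ℝ} (hint : ∀ k, Integrable (d k) μ) (hd : ∀ k s, 0 ≤ d k s)
    (hlim : Tendsto (fun k => ∫ s, d k s ∂μ) atTop (𝓝 0)) :
    ∃ ψ : ℕ → ℕ, StrictMono ψ ∧ ∀ᵐ s ∂μ, Tendsto (fun k => d (ψ k) s) atTop (𝓝 0) := by
  refine TendstoInMeasure.exists_seq_tendsto_ae (g := fun _ => 0) <|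
    tendstoInMeasure_of_tendsto_eLpNorm (p := 1) one_ne_zero (fun k => (hint k).1)
      aestronglyMeasurable_const ?_
  have hnorm : ∀ k, eLpNorm (d k - fun _ => 0) 1 μ = ENNReal.ofReal (∫ s, d k s ∂μ) := fun k => by
    rw [show (d k - fun _ => (0 : ℝ)) = d k from sub_zero _, eLpNorm_one_eq_lintegral_enorm,
      ← ofReal_integral_norm_eq_lintegral_enorm (hint k)]
    simp only [Real.norm_of_nonneg (hd k _)]
  simpa only [hnorm, ENNReal.ofReal_zero] using ENNReal.tendsto_ofReal hlim

theorem exists_subseq_tendsto_of_lipschitzWith {α E : Type*} [PseudoMetricSpace α] [CompactSpace α]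
    [MetricSpace E] {y : ℕ → α → E} {C : ℝ≥0} (hy : ∀ k, LipschitzWith C (y k)) {S : Set E}
    (hS : IsCompact S) (hyS : ∀ k s, y k s ∈ S) :
    ∃ x : C(α, E), ∃ ψ : ℕ → ℕ, StrictMono ψ ∧
      ∀ s, Tendsto (fun k => y (ψ k) s) atTop (𝓝 (x s)) := by
  let Y : ℕ → BoundedContinuousFunction α E := fun k =>
    .mkOfCompact ⟨y k, (hy k).continuous⟩
  have hcompact : IsCompact (closure (range Y)) := by
    refine BoundedContinuousFunction.arzela_ascoli S hS _ ?_ ?_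
    · rintro _ s ⟨k, rfl⟩
      exact hyS k s
    · refine (LipschitzWith.uniformEquicontinuous _ C ?_).equicontinuous
      rintro ⟨_, k, rfl⟩
      exact hy k
  obtain ⟨x, -, ψ, hψ, hx⟩ := hcompact.tendsto_subseq fun k => subset_closure (mem_range_self k)
  exact ⟨x.toContinuousMap, ψ, hψ, fun s =>
    ((continuous_eval_const s).tendsto x).comp hx⟩

theorem measurable_comp_of_continuousOn {α β γ : Type*} [MeasurableSpace α] [TopologicalSpace β]
    [MeasurableSpace β] [OpensMeasurableSpace β] [TopologicalSpace γ] [MeasurableSpace γ]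
    [BorelSpace γ] {φ : β → γ} {K : Set β} (hφ : ContinuousOn φ K) {a : α → β} (ha : Measurable a)
    (haK : ∀ s, a s ∈ K) : Measurable fun s => φ (a s) :=
  hφ.domRestrict.measurable.comp (ha.subtype_mk (h := haK))

variable {E V : Type*} [NormedAddCommGroup E] [NormedSpace ℝ E]

theorem lipschitzWith_integralCurve {b : ℝ → E} {C : ℝ≥0} (hb : AEStronglyMeasurable b)
    (hbC : ∀ s, ‖b s‖ ≤ C) (x₀ : E) : LipschitzWith C (integralCurve x₀ b) := by
  have hint : ∀ s t, IntervalIntegrable b volume s t := fun s t =>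
    (intervalIntegrable_const (c := (C : ℝ))).mono_fun hb.restrict
      (ae_of_all _ fun r => (hbC r).trans (Real.le_norm_self _))
  refine LipschitzWith.of_dist_le_mul fun s t => ?_
  rw [dist_comm, dist_eq_norm, integralCurve, integralCurve, add_sub_add_left_eq_sub,
    intervalIntegral.integral_interval_sub_left (hint _ _) (hint _ _), dist_comm s, Real.dist_eq]
  exact intervalIntegral.norm_integral_le_of_norm_le_const fun r _ => hbC r

theorem dist_integralCurve_le {b : ℝ → E} {C : ℝ≥0} (hbC : ∀ s, ‖b s‖ ≤ C) (x₀ : E) (s : ℝ) :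
    dist (integralCurve x₀ b s) x₀ ≤ C * |s| := by
  rw [dist_eq_norm, integralCurve, add_sub_cancel_left, ← sub_zero s]
  simpa only [sub_zero] using
    intervalIntegral.norm_integral_le_of_norm_le_const (a := 0) (b := s) fun r _ => hbC r

variable [MeasurableSpace E] [MeasurableSpace V] {K : Set (ℝ × E × V)} {XT : Set E}
  {F : ℝ × E × V → E} {h : ℝ × E × V → ℝ} {H : E → ℝ}
  {T c : ℝ} {x₀ : E} {a : ℕ → ℝ → ℝ × E × V} {p : ℕ → E}

/-- The curve `x` is a limit of the approximating sequence `(a, p)`: the integral curves of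
`F ∘ a k` converge to `x`, the time and state components of `a k s` converge to `(s, x s)` for
almost every `s`, and `p k` converges to `x T`. -/
structure IsLimitCurve (F : ℝ × E × V → E) (T : ℝ) (x₀ : E) (a : ℕ → ℝ → ℝ × E × V)
    (p : ℕ → E) (x : ℝ → E) : Prop where
  continuous : Continuous x
  tendsto_integralCurve : ∀ s ∈ Icc 0 T,
    Tendsto (fun k => integralCurve x₀ (fun r => F (a k r)) s) atTop (𝓝 (x s))
  tendsto_time_state : ∀ᵐ s ∂volume.restrict (Icc 0 T),
    Tendsto (fun k => ((a k s).1, (a k s).2.1)) atTop (𝓝 (s, x s))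
  tendsto_terminal : Tendsto p atTop (𝓝 (x T))

theorem IsApproximatingSequence.comp_strictMono {ψ : ℕ → ℕ} (hψ : StrictMono ψ)
    (ha : IsApproximatingSequence K XT F h H T x₀ c a p) :
    IsApproximatingSequence K XT F h H T x₀ c (a ∘ ψ) (p ∘ ψ) where
  measurable k := ha.measurable (ψ k)
  mem k := ha.mem (ψ k)
  terminal_mem k := ha.terminal_mem (ψ k)
  cost_le k := (ha.cost_le (ψ k)).trans <| by
    gcongr
    exact hψ.le_apply
  tendsto_deviation := ha.tendsto_deviation.comp hψ.tendsto_atTop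
  tendsto_terminal_deviation := ha.tendsto_terminal_deviation.comp hψ.tendsto_atTop

variable [BorelSpace E] [ProperSpace E] [TopologicalSpace V] [OpensMeasurableSpace V]
  [SecondCountableTopology V]

theorem IsApproximatingSequence.exists_subseq_isLimitCurve
    (ha : IsApproximatingSequence K XT F h H T x₀ c a p) (hT : 0 ≤ T) (hF : ContinuousOn F K)
    {C : ℝ≥0} (hFC : ∀ z ∈ K, ‖F z‖ ≤ C) :
    ∃ (ψ : ℕ → ℕ) (x : ℝ → E), StrictMono ψ ∧ IsLimitCurve F T x₀ (a ∘ ψ) (p ∘ ψ) x := by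
  set y : ℕ → ℝ → E := fun k => integralCurve x₀ (fun r => F (a k r))
  have hFa : ∀ k, Measurable fun r => F (a k r) := fun k =>
    measurable_comp_of_continuousOn hF (ha.measurable k) (ha.mem k)
  have hy : ∀ k, LipschitzWith C (y k) := fun k =>
    lipschitzWith_integralCurve (hFa k).aestronglyMeasurable (fun s => hFC _ (ha.mem k s)) x₀
  set w : ℕ → ℝ → ℝ × E := fun k s => (s, y k s) - ((a k s).1, (a k s).2.1)
  have hw : ∀ k, Measurable (w k) := fun k =>
    (measurable_id.prodMk (hy k).continuous.measurable).sub
      ((ha.measurable k).fst.prodMk (ha.measurable k).snd.fst)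
  have hd_int : ∀ k, Integrable (fun s => min 1 ‖w k s‖) (volume.restrict (Icc 0 T)) := fun k =>
    .of_bound ((hw k).norm.const_inf 1).aestronglyMeasurable 1 (ae_of_all _ fun s => by
      rw [Real.norm_of_nonneg (by positivity)]
      exact min_le_left _ _)
  have hd_lim : Tendsto (fun k => ∫ s in Icc 0 T, min 1 ‖w k s‖) atTop (𝓝 0) := by
    simpa only [intervalIntegral.integral_of_le hT, ← integral_Icc_eq_integral_Ioc] using
      ha.tendsto_deviation
  obtain ⟨ψ₁, hψ₁, hw_lim⟩ := exists_subseq_ae_tendsto_zero hd_int (fun k s => by positivity) hd_lim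
  obtain ⟨x, ψ₂, hψ₂, hx⟩ := exists_subseq_tendsto_of_lipschitzWith
    (y := fun k (s : Icc 0 T) => y (ψ₁ k) s)
    (fun k => ((hy (ψ₁ k)).comp (.subtype_val _)).weaken (mul_one C).le)
    (isCompact_closedBall x₀ (C * T)) fun k s => by
      have hs : |s.1| ≤ T := (abs_of_nonneg s.2.1).trans_le s.2.2
      exact (dist_integralCurve_le (fun r => hFC _ (ha.mem _ r)) x₀ s).trans (by gcongr)
  have hxIcc : ∀ s ∈ Icc 0 T, Tendsto (fun k => y (ψ₁ (ψ₂ k)) s) atTop (𝓝 (IccExtend hT x s)) :=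
    fun s hs => by simpa only [IccExtend_of_mem hT x hs] using hx ⟨s, hs⟩
  refine ⟨ψ₁ ∘ ψ₂, IccExtend hT x, hψ₁.comp hψ₂, x.continuous.Icc_extend', hxIcc, ?_, ?_⟩
  · filter_upwards [hw_lim, ae_restrict_mem measurableSet_Icc] with s hs hsT
    have hdev := (tendsto_zero_of_tendsto_min_one_norm hs).comp hψ₂.tendsto_atTop
    simpa [w] using ((tendsto_const_nhds (x := s)).prodMk_nhds (hxIcc s hsT)).sub hdev
  · have hdev := (tendsto_zero_of_tendsto_min_one_norm ha.tendsto_terminal_deviation).comp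
      (hψ₁.comp hψ₂).tendsto_atTop
    simpa [y, Function.comp_def] using (hxIcc T ⟨hT, le_rfl⟩).sub hdev

end Compactness

/-! ### Convex combinations of controls -/

section WeakLimits

theorem exists_forall_mem_of_antitone_convex {E : Type*} [NormedAddCommGroup E]
    [InnerProductSpace ℝ E] [CompleteSpace E] {S : ℕ → Set E} (hS : Antitone S)
    (hclosed : ∀ k, IsClosed (S k)) (hconv : ∀ k, Convex ℝ (S k)) {R : ℝ}
    (hR : ∀ k, ∃ w ∈ S k, ‖w‖ ≤ R) : ∃ w, ∀ k, w ∈ S k := by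
  have hmin : ∀ k, ∃ q ∈ S k, ∀ w ∈ S k, ‖q‖ ^ 2 ≤ inner ℝ q w := fun k => by
    obtain ⟨w₀, hw₀, -⟩ := hR k
    obtain ⟨q, hq, hqmin⟩ :=
      exists_norm_eq_iInf_of_complete_convex ⟨w₀, hw₀⟩ (hclosed k).isComplete (hconv k) 0
    refine ⟨q, hq, fun w hw => ?_⟩
    have := (norm_eq_iInf_iff_real_inner_le_zero (hconv k) hq).1 hqmin w hw
    rw [zero_sub, inner_neg_left, inner_sub_right, real_inner_self_eq_norm_sq] at this
    linarith
  choose q hq hqmin using hmin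
  have hdist : ∀ k l, k ≤ l → ‖q l - q k‖ ^ 2 ≤ ‖q l‖ ^ 2 - ‖q k‖ ^ 2 := fun k l hkl => by
    rw [norm_sub_sq_real, real_inner_comm]
    linarith [hqmin k (q l) (hS hkl (hq l))]
  have hmono : Monotone fun k => ‖q k‖ ^ 2 := fun k l hkl =>
    sub_nonneg.1 ((sq_nonneg _).trans (hdist k l hkl))
  have hbdd : BddAbove (range fun k => ‖q k‖ ^ 2) := by
    refine ⟨R ^ 2, forall_mem_range.2 fun k => ?_⟩
    obtain ⟨w, hw, hwR⟩ := hR k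
    have hqw : ‖q k‖ ^ 2 ≤ ‖q k‖ * R := (hqmin k w hw).trans <|
      (real_inner_le_norm _ _).trans (mul_le_mul_of_nonneg_left hwR (norm_nonneg _))
    nlinarith [norm_nonneg (q k), norm_nonneg w]
  have hcauchy : CauchySeq q := by
    have hsq := (tendsto_atTop_ciSup hmono hbdd).cauchySeq
    rw [Metric.cauchySeq_iff'] at hsq ⊢
    intro ε hε
    obtain ⟨N, hN⟩ := hsq (ε ^ 2) (by positivity)
    refine ⟨N, fun k hk => ?_⟩
    rw [dist_eq_norm]
    exact lt_of_pow_lt_pow_left₀ 2 hε.le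
      ((hdist N k hk).trans_lt ((le_abs_self _).trans_lt (hN k hk)))
  obtain ⟨w, hw⟩ := cauchySeq_tendsto_of_complete hcauchy
  exact ⟨w, fun k => (hclosed k).mem_of_tendsto hw <|
    (eventually_ge_atTop k).mono fun l hl => hS hl (hq l)⟩

theorem exists_forall_mem_closure_convexHull {E : Type*} [NormedAddCommGroup E]
    [InnerProductSpace ℝ E] [CompleteSpace E] {u : ℕ → E} {R : ℝ} (hu : ∀ k, ‖u k‖ ≤ R) :
    ∃ w, ∀ k, w ∈ closure (convexHull ℝ (u '' Ici k)) :=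
  exists_forall_mem_of_antitone_convex
    (fun _ _ hkl => closure_mono (convexHull_mono (image_mono (Ici_subset_Ici.2 hkl))))
    (fun _ => isClosed_closure) (fun _ => (convex_convexHull ℝ _).closure)
    fun k => ⟨u k, subset_closure (subset_convexHull ℝ _ (mem_image_of_mem u self_mem_Ici)), hu k⟩

variable {α V : Type*} [MeasurableSpace α] {μ : Measure α} [NormedAddCommGroup V]
  [NormedSpace ℝ V]

theorem exists_mem_convexHull_ae_eq_of_mem_convexHull_toLp {q : ℝ≥0∞} {ι : Type*}
    {u : ι → α → V} (hu : ∀ i, MemLp (u i) q μ) {s : Set ι} {W : Lp V q μ}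
    (hW : W ∈ convexHull ℝ ((fun i => (hu i).toLp (u i)) '' s)) :
    ∃ v ∈ convexHull ℝ (u '' s), W =ᵐ[μ] v := by
  refine convexHull_min (t := {W : Lp V q μ | ∃ v ∈ convexHull ℝ (u '' s), W =ᵐ[μ] v}) ?_ ?_ hW
  · rintro _ ⟨i, hi, rfl⟩
    exact ⟨u i, subset_convexHull ℝ _ (mem_image_of_mem u hi), (hu i).coeFn_toLp⟩
  · rintro W₁ ⟨v₁, hv₁, hWv₁⟩ W₂ ⟨v₂, hv₂, hWv₂⟩ b₁ b₂ hb₁ hb₂ hb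
    refine ⟨b₁ • v₁ + b₂ • v₂, convex_convexHull ℝ _ hv₁ hv₂ hb₁ hb₂ hb, ?_⟩
    exact (Lp.coeFn_add _ _).trans <|
      ((Lp.coeFn_smul b₁ W₁).trans (hWv₁.const_smul b₁)).add
        ((Lp.coeFn_smul b₂ W₂).trans (hWv₂.const_smul b₂))

theorem exists_mem_convexHull_tendsto_ae_of_norm_le [IsFiniteMeasure μ] {E : Type*}
    [NormedAddCommGroup E] [InnerProductSpace ℝ E] [CompleteSpace E] {u : ℕ → α → E}
    (hu : ∀ k, AEStronglyMeasurable (u k) μ) {R : ℝ} (hR : ∀ k s, ‖u k s‖ ≤ R) :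
    ∃ (w : α → E) (v : ℕ → α → E), StronglyMeasurable w ∧
      (∀ k, v k ∈ convexHull ℝ (u '' Ici k)) ∧
        ∀ᵐ s ∂μ, Tendsto (fun k => v k s) atTop (𝓝 (w s)) := by
  have hmem : ∀ k, MemLp (u k) 2 μ := fun k => .of_bound (hu k) R (ae_of_all _ (hR k))
  obtain ⟨w, hw⟩ := exists_forall_mem_closure_convexHull (u := fun k => (hmem k).toLp (u k))
    fun k => Lp.norm_le_of_ae_bound (abs_nonneg R) <|
      (hmem k).coeFn_toLp.mono fun s hs => by rw [hs]; exact (hR k s).trans (le_abs_self R)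
  choose W hW hWw using fun k : ℕ =>
    Metric.mem_closure_iff.1 (hw k) (1 / (k + 1)) Nat.one_div_pos_of_nat
  have hlim : Tendsto W atTop (𝓝 w) := tendsto_iff_dist_tendsto_zero.2 <|
    squeeze_zero (fun _ => dist_nonneg) (fun k => (dist_comm _ _).trans_le (hWw k).le)
      tendsto_one_div_add_atTop_nhds_zero_nat
  obtain ⟨ψ, hψ, hae⟩ := (tendstoInMeasure_of_tendsto_Lp hlim).exists_seq_tendsto_ae
  choose v hv hWv using fun k => exists_mem_convexHull_ae_eq_of_mem_convexHull_toLp hmem (hW (ψ k))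
  refine ⟨w, v, Lp.stronglyMeasurable w, fun k => convexHull_mono
    (image_mono (Ici_subset_Ici.2 hψ.le_apply)) (hv k), ?_⟩
  filter_upwards [hae, ae_all_iff.2 hWv] with s hs hsv
  exact hs.congr hsv

theorem exists_mem_convexHull_tendsto_ae [IsFiniteMeasure μ] [FiniteDimensional ℝ V]
    [MeasurableSpace V] [BorelSpace V] {U : Set V} (hU : IsCompact U) (hUconv : Convex ℝ U)
    {u : ℕ → α → V} (hu : ∀ k, Measurable (u k)) (huU : ∀ k s, u k s ∈ U) :
    ∃ (w : α → V) (v : ℕ → α → V), Measurable w ∧ (∀ s, w s ∈ U) ∧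
      (∀ k, v k ∈ convexHull ℝ (u '' Ici k)) ∧
        ∀ᵐ s ∂μ, Tendsto (fun k => v k s) atTop (𝓝 (w s)) := by
  set e : V ≃L[ℝ] EuclideanSpace ℝ (Fin (Module.finrank ℝ V)) := toEuclidean
  obtain ⟨R, hR⟩ := hU.exists_bound_of_continuousOn e.continuous.continuousOn
  obtain ⟨w, v, hw, hv, hvw⟩ := exists_mem_convexHull_tendsto_ae_of_norm_le (μ := μ)
    (u := fun k s => e (u k s))
    (fun k => (e.continuous.measurable.comp (hu k)).aestronglyMeasurable) fun k s => hR _ (huU k s)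
  have hv' : ∀ k, (fun s => e.symm (v k s)) ∈ convexHull ℝ (u '' Ici k) := fun k => by
    have := mem_image_of_mem ((e.symm : _ →ₗ[ℝ] V).compLeft α) (hv k)
    rw [LinearMap.image_convexHull, image_image] at this
    simpa [LinearMap.compLeft, Function.comp_def] using this
  have hvU : ∀ k s, e.symm (v k s) ∈ U := fun k s =>
    convexHull_min (t := univ.pi fun _ => U)
      (by rintro _ ⟨l, -, rfl⟩; exact fun s _ => huU l s) (convex_pi fun _ _ => hUconv) (hv' k) s
      (mem_univ s)
  have hvw' : ∀ᵐ s ∂μ, Tendsto (fun k => e.symm (v k s)) atTop (𝓝 (e.symm (w s))) :=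
    hvw.mono fun s hs => (e.symm.continuous.tendsto _).comp hs
  have hwm : Measurable fun s => e.symm (w s) := e.symm.continuous.measurable.comp hw.measurable
  classical
  refine ⟨fun s => if e.symm (w s) ∈ U then e.symm (w s) else u 0 s, fun k s => e.symm (v k s),
    hwm.ite (hwm hU.measurableSet) (hu 0), fun s => ?_, hv', ?_⟩
  · dsimp only
    split_ifs with hs
    exacts [hs, huU 0 s]
  · filter_upwards [hvw'] with s hs
    rwa [if_pos (hU.isClosed.mem_of_tendsto hs (Eventually.of_forall fun k => hvU k s))]

theorem convexOn_integral_comp {U : Set V} [MeasurableSpace V] [BorelSpace V]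
    [SecondCountableTopology V] {φ : α → V → ℝ} (hU : Convex ℝ U)
    (hφ : ∀ᵐ s ∂μ, ConvexOn ℝ U (φ s)) (hint : ∀ v : α → V, Measurable v → (∀ s, v s ∈ U) →
      Integrable (fun s => φ s (v s)) μ) :
    ConvexOn ℝ {v : α → V | Measurable v ∧ ∀ s, v s ∈ U} fun v => ∫ s, φ s (v s) ∂μ := by
  have hdom : Convex ℝ {v : α → V | Measurable v ∧ ∀ s, v s ∈ U} :=
    fun v₁ h₁ v₂ h₂ b₁ b₂ hb₁ hb₂ hb =>
      ⟨(h₁.1.const_smul b₁).add (h₂.1.const_smul b₂), fun s => hU (h₁.2 s) (h₂.2 s) hb₁ hb₂ hb⟩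
  refine ⟨hdom, fun v₁ h₁ v₂ h₂ b₁ b₂ hb₁ hb₂ hb => ?_⟩
  have hv := hdom h₁ h₂ hb₁ hb₂ hb
  have hint₁ := (hint v₁ h₁.1 h₁.2).const_mul b₁
  have hint₂ := (hint v₂ h₂.1 h₂.2).const_mul b₂
  simp only [smul_eq_mul]
  rw [← integral_const_mul, ← integral_const_mul, ← integral_add hint₁ hint₂]
  exact integral_mono_ae (hint _ hv.1 hv.2) (hint₁.add hint₂) <|
    hφ.mono fun s hs => hs.2 (h₁.2 s) (h₂.2 s) hb₁ hb₂ hb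

theorem integral_le_of_mem_convexHull_of_tendsto_ae [IsFiniteMeasure μ] {U : Set V}
    [MeasurableSpace V] [BorelSpace V] [SecondCountableTopology V] (hU : Convex ℝ U)
    {φ : α → V → ℝ} (hφ_conv : ∀ᵐ s ∂μ, ConvexOn ℝ U (φ s))
    (hφ_cont : ∀ᵐ s ∂μ, ContinuousOn (φ s) U) {B : ℝ} (hφ_bound : ∀ᵐ s ∂μ, ∀ v ∈ U, |φ s v| ≤ B)
    (hφ_meas : ∀ v : α → V, Measurable v → (∀ s, v s ∈ U) →
      AEStronglyMeasurable (fun s => φ s (v s)) μ)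
    {u v : ℕ → α → V} {w : α → V} (hu : ∀ k, Measurable (u k)) (huU : ∀ k s, u k s ∈ U)
    (hwU : ∀ s, w s ∈ U) (hv : ∀ k, v k ∈ convexHull ℝ (u '' Ici k))
    (hvw : ∀ᵐ s ∂μ, Tendsto (fun k => v k s) atTop (𝓝 (w s))) {r : ℕ → ℝ} {ρ : ℝ}
    (hle : ∀ k, ∫ s, φ s (u k s) ∂μ ≤ r k) (hr : Tendsto r atTop (𝓝 ρ)) :
    ∫ s, φ s (w s) ∂μ ≤ ρ := by
  have hconv := convexOn_integral_comp hU hφ_conv fun v hv hvU =>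
    .of_bound (hφ_meas v hv hvU) B (hφ_bound.mono fun s hs => hs _ (hvU s))
  have hhull : ∀ {k ρ'}, (∀ l ≥ k, r l ≤ ρ') →
      (Measurable (v k) ∧ ∀ s, v k s ∈ U) ∧ ∫ s, φ s (v k s) ∂μ ≤ ρ' := fun {k ρ'} hk =>
    convexHull_min (by
      rintro _ ⟨l, hl, rfl⟩
      exact ⟨⟨hu l, huU l⟩, (hle l).trans (hk l hl)⟩) (hconv.convex_le ρ') (hv k)
  obtain ⟨b, hb⟩ := hr.bddAbove_range
  have hvU : ∀ k, Measurable (v k) ∧ ∀ s, v k s ∈ U := fun k =>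
    (hhull fun l _ => hb (mem_range_self l)).1
  have hlim : Tendsto (fun k => ∫ s, φ s (v k s) ∂μ) atTop (𝓝 (∫ s, φ s (w s) ∂μ)) := by
    refine tendsto_integral_of_dominated_convergence (fun _ => B)
      (fun k => hφ_meas _ (hvU k).1 (hvU k).2) (integrable_const B)
      (fun k => hφ_bound.mono fun s hs => hs _ ((hvU k).2 s)) ?_
    filter_upwards [hφ_cont, hvw] with s hs hvs
    exact (hs _ (hwU s)).tendsto.comp <| tendsto_nhdsWithin_iff.2
      ⟨hvs, Eventually.of_forall fun k => (hvU k).2 s⟩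
  refine le_of_forall_pos_le_add fun ε hε => ?_
  obtain ⟨k₀, hk₀⟩ := eventually_atTop.1 (hr.eventually_le_const (lt_add_of_pos_right ρ hε))
  exact le_of_tendsto hlim <| (eventually_ge_atTop k₀).mono fun k hk =>
    (hhull fun l hl => hk₀ l (hk.trans hl)).2

end WeakLimits

/-! ### Limits of approximating sequences -/

section LimitCurve

theorem integrable_comp_of_continuousOn_of_isCompact {α β G : Type*} [MeasurableSpace α]
    {μ : Measure α} [IsFiniteMeasure μ] [MetricSpace β] [MeasurableSpace β] [BorelSpace β]
    [NormedAddCommGroup G] {K : Set β} (hK : IsCompact K) {φ : β → G} (hφ : ContinuousOn φ K)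
    {b : α → β} (hb : AEMeasurable b μ) (hbK : ∀ᵐ s ∂μ, b s ∈ K) :
    Integrable (fun s => φ (b s)) μ := by
  refine (integrable_of_continuousOn_of_isCompact hK ?_ hφ).comp_aemeasurable hb
  rw [Measure.map_apply_of_aemeasurable hb hK.measurableSet.compl]
  exact measure_eq_zero_iff_ae_notMem.2 (hbK.mono fun _ => not_not.2)

theorem tendsto_integral_comp_sub_integral_comp {α β : Type*} [MeasurableSpace α] {μ : Measure α}
    [IsFiniteMeasure μ] [MetricSpace β] [MeasurableSpace β] [BorelSpace β] {K : Set β}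
    (hK : IsCompact K) {φ : β → ℝ} (hφ : ContinuousOn φ K) {b b' : ℕ → α → β}
    (hb : ∀ k, AEMeasurable (b k) μ) (hb' : ∀ k, AEMeasurable (b' k) μ)
    (hbK : ∀ k, ∀ᵐ s ∂μ, b k s ∈ K) (hbK' : ∀ k, ∀ᵐ s ∂μ, b' k s ∈ K)
    (hdist : ∀ᵐ s ∂μ, Tendsto (fun k => dist (b k s) (b' k s)) atTop (𝓝 0)) :
    Tendsto (fun k => ∫ s, φ (b k s) ∂μ - ∫ s, φ (b' k s) ∂μ) atTop (𝓝 0) := by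
  obtain ⟨B, hB⟩ := hK.exists_bound_of_continuousOn hφ
  have hint := fun k => integrable_comp_of_continuousOn_of_isCompact hK hφ (hb k) (hbK k)
  have hint' := fun k => integrable_comp_of_continuousOn_of_isCompact hK hφ (hb' k) (hbK' k)
  simp only [← integral_sub (hint _) (hint' _)]
  rw [← integral_zero α ℝ (μ := μ)]
  refine tendsto_integral_of_dominated_convergence (fun _ => B + B)
    (fun k => ((hint k).sub (hint' k)).1) (integrable_const _) (fun k => ?_) ?_
  · filter_upwards [hbK k, hbK' k] with s hs hs'
    exact (norm_sub_le _ _).trans (add_le_add (hB _ hs) (hB _ hs'))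
  · filter_upwards [hdist, ae_all_iff.2 hbK, ae_all_iff.2 hbK'] with s hs hsK hsK'
    have hpair : Tendsto (fun k => (b k s, b' k s)) atTop (uniformity β ⊓ 𝓟 (K ×ˢ K)) :=
      tendsto_inf.2 ⟨tendsto_uniformity_iff_dist_tendsto_zero.2 hs,
        tendsto_principal.2 <| Eventually.of_forall fun k => ⟨hsK k, hsK' k⟩⟩
    refine tendsto_zero_iff_norm_tendsto_zero.2 ?_
    simp only [← dist_eq_norm]
    exact tendsto_uniformity_iff_dist_tendsto_zero.1
      (Tendsto.comp (hK.uniformContinuousOn_of_continuous hφ) hpair)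

variable {E V : Type*} [NormedAddCommGroup E] [NormedSpace ℝ E] {X : Set E} {U : Set V}
  {F : ℝ × E × V → E} {T : ℝ} {x₀ : E} {a : ℕ → ℝ → ℝ × E × V} {p : ℕ → E} {x : ℝ → E}

theorem IsLimitCurve.mem (hx : IsLimitCurve F T x₀ a p x) (hT : 0 < T) (hX : IsClosed X)
    (haX : ∀ k s, (a k s).2.1 ∈ X) : ∀ s ∈ Icc 0 T, x s ∈ X := by
  have hae : (fun s => Metric.infDist (x s) X) =ᵐ[volume.restrict (Icc 0 T)] fun _ => 0 := by
    filter_upwards [hx.tendsto_time_state] with s hs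
    exact Metric.infDist_zero_of_mem <| hX.mem_of_tendsto ((continuous_snd.tendsto _).comp hs)
      (Eventually.of_forall fun k => haX k s)
  have heq := Measure.eqOn_Icc_of_ae_eq volume hT.ne hae
    ((Metric.continuous_infDist_pt X).comp hx.continuous).continuousOn continuousOn_const
  exact fun s hs => (hX.mem_iff_infDist_zero ⟨_, haX 0 0⟩).2 (heq hs)

variable [NormedAddCommGroup V] [NormedSpace ℝ V] [FiniteDimensional ℝ V] [FiniteDimensional ℝ E]
  [MeasurableSpace E] [BorelSpace E] [MeasurableSpace V] [BorelSpace V]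

/-- A control `w` along the curve `x` at which every running cost that is convex in the control is
at most the limit of its values at the curves `a k`. -/
structure IsLimitControl (T : ℝ) (X : Set E) (U : Set V) (a : ℕ → ℝ → ℝ × E × V) (x : ℝ → E)
    (w : ℝ → V) : Prop where
  measurable : Measurable w
  mem : ∀ s, w s ∈ U
  integral_le : ∀ φ : ℝ × E × V → ℝ, ContinuousOn φ (Icc 0 T ×ˢ X ×ˢ U) →
    (∀ t ∈ Icc 0 T, ∀ y ∈ X, ConvexOn ℝ U fun v => φ (t, y, v)) →
    ∀ t ∈ Icc 0 T, ∀ (r : ℕ → ℝ) (ρ : ℝ), (∀ k, ∫ s in Icc 0 t, φ (a k s) ≤ r k) →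
      Tendsto r atTop (𝓝 ρ) → ∫ s in Icc 0 t, φ (s, x s, w s) ≤ ρ

theorem IsLimitCurve.exists_isLimitControl (hx : IsLimitCurve F T x₀ a p x) (hT : 0 < T)
    (hX : IsCompact X) (hU : IsCompact U) (hUconv : Convex ℝ U) (ha : ∀ k, Measurable (a k))
    (haK : ∀ k s, a k s ∈ Icc 0 T ×ˢ X ×ˢ U) : ∃ w, IsLimitControl T X U a x w := by
  have hxX := hx.mem hT hX.isClosed fun k s => (haK k s).2.1
  have hK : IsCompact (Icc 0 T ×ˢ X ×ˢ U) := isCompact_Icc.prod (hX.prod hU)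
  have hu : ∀ k, Measurable fun s => (a k s).2.2 := fun k => (ha k).snd.snd
  have hgraph : ∀ {v : ℝ → V}, Measurable v → Measurable fun s => (s, x s, v s) := fun hv =>
    measurable_id.prodMk (hx.continuous.measurable.prodMk hv)
  obtain ⟨w, v, hw, hwU, hv, hvw⟩ := exists_mem_convexHull_tendsto_ae
    (μ := volume.restrict (Icc 0 T)) hU hUconv hu fun k s => (haK k s).2.2
  refine ⟨w, hw, hwU, fun φ hφ hφconv t ht r ρ hle hr => ?_⟩
  have hle_T : volume.restrict (Icc 0 t) ≤ volume.restrict (Icc 0 T) :=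
    Measure.restrict_mono (Icc_subset_Icc_right ht.2) le_rfl
  have hIcc : ∀ᵐ s ∂volume.restrict (Icc 0 t), s ∈ Icc 0 T :=
    ae_mono hle_T (ae_restrict_mem measurableSet_Icc)
  have hdiff : Tendsto (fun k => (∫ s in Icc 0 t, φ (s, x s, (a k s).2.2))
      - ∫ s in Icc 0 t, φ (a k s)) atTop (𝓝 0) := by
    refine tendsto_integral_comp_sub_integral_comp hK hφ (fun k => (hgraph (hu k)).aemeasurable)
      (fun k => (ha k).aemeasurable) (fun k => hIcc.mono fun s hs => ⟨hs, hxX s hs, (haK k s).2.2⟩)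
      (fun k => ae_of_all _ (haK k)) ?_
    filter_upwards [ae_mono hle_T hx.tendsto_time_state] with s hs
    simpa [Prod.dist_eq] using (tendsto_const_nhds (x := (s, x s))).dist hs
  obtain ⟨B, hB⟩ := hK.exists_bound_of_continuousOn hφ
  refine integral_le_of_mem_convexHull_of_tendsto_ae hUconv (φ := fun s v => φ (s, x s, v)) (B := B)
    (hIcc.mono fun s hs => hφconv s hs (x s) (hxX s hs))
    (hIcc.mono fun s hs => hφ.comp (by fun_prop) fun v hv => ⟨hs, hxX s hs, hv⟩)
    (hIcc.mono fun s hs v hv => hB _ ⟨hs, hxX s hs, hv⟩)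
    (fun v hv hvU => (integrable_comp_of_continuousOn_of_isCompact hK hφ (hgraph hv).aemeasurable
      (hIcc.mono fun s hs => ⟨hs, hxX s hs, hvU s⟩)).1)
    hu (fun k s => (haK k s).2.2) hwU hv (ae_mono hle_T hvw) (fun k => ?_)
    (by simpa only [zero_add] using hdiff.add hr)
  linarith [hle k]

theorem IsLimitCurve.integrableOn_velocity (hx : IsLimitCurve F T x₀ a p x) (hT : 0 < T)
    (hX : IsCompact X) (hU : IsCompact U) (haK : ∀ k s, a k s ∈ Icc 0 T ×ˢ X ×ˢ U)
    (hF : ContinuousOn F (Icc 0 T ×ˢ X ×ˢ U)) {w : ℝ → V} (hw : IsLimitControl T X U a x w) :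
    IntegrableOn (fun s => F (s, x s, w s)) (Icc 0 T) :=
  integrable_comp_of_continuousOn_of_isCompact (isCompact_Icc.prod (hX.prod hU)) hF
    (measurable_id.prodMk (hx.continuous.measurable.prodMk hw.measurable)).aemeasurable
    ((ae_restrict_mem measurableSet_Icc).mono fun s hs =>
      ⟨hs, hx.mem hT hX.isClosed (fun k s => (haK k s).2.1) s hs, hw.mem s⟩)

theorem IsLimitCurve.eq_add_integral (hx : IsLimitCurve F T x₀ a p x) (hT : 0 < T)
    (hX : IsCompact X) (hU : IsCompact U) (ha : ∀ k, Measurable (a k))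
    (haK : ∀ k s, a k s ∈ Icc 0 T ×ˢ X ×ˢ U) (hF : ContinuousOn F (Icc 0 T ×ˢ X ×ˢ U))
    (hFconv : ∀ (L : StrongDual ℝ E) (t : ℝ) (y : E), ConvexOn ℝ U fun v => L (F (t, y, v)))
    {w : ℝ → V} (hw : IsLimitControl T X U a x w) {t : ℝ} (ht : t ∈ Icc 0 T) :
    x t = x₀ + ∫ s in Icc 0 t, F (s, x s, w s) := by
  have hint : IntegrableOn (fun s => F (s, x s, w s)) (Icc 0 t) :=
    (hx.integrableOn_velocity hT hX hU haK hF hw).mono_set (Icc_subset_Icc_right ht.2)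
  have hint_a : ∀ k, IntegrableOn (fun s => F (a k s)) (Icc 0 t) := fun k =>
    integrable_comp_of_continuousOn_of_isCompact (isCompact_Icc.prod (hX.prod hU)) hF
      (ha k).aemeasurable (ae_of_all _ (haK k))
  have hle : ∀ L : StrongDual ℝ E, L (∫ s in Icc 0 t, F (s, x s, w s)) ≤ L (x t - x₀) := fun L => by
    rw [← L.integral_comp_comm hint]
    refine hw.integral_le (fun z => L (F z)) (L.continuous.comp_continuousOn hF)
      (fun t _ y _ => hFconv L t y) t ht
      (fun k => L (integralCurve x₀ (fun r => F (a k r)) t - x₀)) _ (fun k => ?_)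
      ((L.continuous.tendsto _).comp ((hx.tendsto_integralCurve t ht).sub_const x₀))
    rw [L.integral_comp_comm (hint_a k), integralCurve, add_sub_cancel_left,
      intervalIntegral.integral_of_le ht.1, integral_Icc_eq_integral_Ioc]
  rw [← sub_eq_iff_eq_add']
  refine (SeparatingDual.eq_iff_forall_dual_eq (R := ℝ)).2 fun L => (hle L).antisymm' ?_
  simpa [add_comm] using hle (-L)

end LimitCurve

section Attainment

theorem exists_nnreal_bound_of_continuousOn {α β E : Type*} [TopologicalSpace α]
    [TopologicalSpace β] [SeminormedAddCommGroup E] {K : Set α} {S : Set β} (hK : IsCompact K)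
    (hS : IsCompact S) {F : α → E} {h : α → ℝ} {H : β → ℝ} (hF : ContinuousOn F K)
    (hh : ContinuousOn h K) (hH : ContinuousOn H S) :
    ∃ C : ℝ≥0, (∀ z ∈ K, ‖F z‖ ≤ C) ∧ (∀ z ∈ K, |h z| ≤ C) ∧ ∀ p ∈ S, |H p| ≤ C := by
  obtain ⟨B, hB⟩ := hK.exists_bound_of_continuousOn (hF.norm.add hh.norm)
  obtain ⟨B', hB'⟩ := hS.exists_bound_of_continuousOn hH
  have hbound : ∀ z ∈ K, ‖F z‖ + ‖h z‖ ≤ max B B' := fun z hz =>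
    (Real.le_norm_self _).trans ((hB z hz).trans (le_max_left _ _))
  refine ⟨(max B B').toNNReal, fun z hz => ?_, fun z hz => ?_, fun p hp => ?_⟩
  · exact (le_add_of_nonneg_right (norm_nonneg _)).trans
      ((hbound z hz).trans (Real.le_coe_toNNReal _))
  · exact (le_add_of_nonneg_left (norm_nonneg _)).trans
      ((hbound z hz).trans (Real.le_coe_toNNReal _))
  · exact (hB' p hp).trans ((le_max_right _ _).trans (Real.le_coe_toNNReal _))

variable {n m : ℕ} {T : ℝ} {X XT : Set (Fin n → ℝ)} {x₀ : Fin n → ℝ}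
  {f : ℝ × (Fin n → ℝ) → Fin n → ℝ} {g : ℝ × (Fin n → ℝ) → Fin n → Fin m → ℝ}
  {h : ℝ × (Fin n → ℝ) × (Fin m → ℝ) → ℝ} {H : (Fin n → ℝ) → ℝ} {c : ℝ}

theorem convexOn_dual_Fvec (f : ℝ × (Fin n → ℝ) → Fin n → ℝ)
    (g : ℝ × (Fin n → ℝ) → Fin n → Fin m → ℝ) (L : StrongDual ℝ (Fin n → ℝ)) (t : ℝ)
    (y : Fin n → ℝ) {U : Set (Fin m → ℝ)} (hU : Convex ℝ U) :
    ConvexOn ℝ U fun u => L (Fvec f g (t, y, u)) := by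
  have hFvec : ∀ u, Fvec f g (t, y, u) = Matrix.mulVecLin (Matrix.of (g (t, y))) u + f (t, y) := by
    intro u
    ext k
    simp [Fvec, Matrix.mulVec, dotProduct, add_comm]
  simp only [hFvec, map_add]
  exact ((L.toLinearMap ∘ₗ Matrix.mulVecLin (Matrix.of (g (t, y)))).convexOn hU).add_const _

theorem IsLimitCurve.exists_isAdmissiblePair {a : ℕ → ℝ → ℝ × (Fin n → ℝ) × (Fin m → ℝ)}
    {p : ℕ → Fin n → ℝ} {x : ℝ → Fin n → ℝ}
    (hap : IsApproximatingSequence (Icc 0 T ×ˢ X ×ˢ Ubox m) XT (Fvec f g) h H T x₀ c a p)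
    (hx : IsLimitCurve (Fvec f g) T x₀ a p x) (hT : 0 < T) (hX : IsCompact X)
    (hXT : IsClosed XT) (hf : ContinuousOn f (Icc 0 T ×ˢ X)) (hg : ContinuousOn g (Icc 0 T ×ˢ X))
    (hh : ContinuousOn h (Icc 0 T ×ˢ X ×ˢ Ubox m)) (hH : ContinuousOn H XT)
    (hconv : ∀ t ∈ Icc 0 T, ∀ y ∈ X, ConvexOn ℝ (Ubox m) fun u => h (t, y, u)) :
    ∃ u, IsAdmissiblePair T X XT x₀ f g x u ∧ Jcost T h H x u ≤ c := by
  have hF : ContinuousOn (Fvec f g) (Icc 0 T ×ˢ X ×ˢ Ubox m) :=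
    continuousOn_Fvec hf hg fun z hz => ⟨hz.1, hz.2.1⟩
  have hU : IsCompact (Ubox m) := isCompact_Icc
  have hUconv : Convex ℝ (Ubox m) := convex_Icc _ _
  obtain ⟨u, hu⟩ := hx.exists_isLimitControl hT hX hU hUconv hap.measurable hap.mem
  have hode : ∀ t ∈ Icc 0 T, x t = x₀ + ∫ s in Icc 0 t, Fvec f g (s, x s, u s) := fun t ht =>
    hx.eq_add_integral hT hX hU hap.measurable hap.mem hF
      (fun L t y => convexOn_dual_Fvec f g L t y hUconv) hu ht
  have hxT : x T ∈ XT :=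
    hXT.mem_of_tendsto hx.tendsto_terminal (Eventually.of_forall hap.terminal_mem)
  have hHp : Tendsto (fun k => H (p k)) atTop (𝓝 (H (x T))) :=
    (hH _ hxT).tendsto.comp (tendsto_nhdsWithin_iff.2
      ⟨hx.tendsto_terminal, Eventually.of_forall hap.terminal_mem⟩)
  have hcost : ∫ s in Icc 0 T, h (s, x s, u s) ≤ c + 0 - H (x T) := by
    refine hu.integral_le h hh hconv T ⟨hT.le, le_rfl⟩ _ _ (fun k => ?_)
      ((tendsto_one_div_add_atTop_nhds_zero_nat.const_add c).sub hHp)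
    rw [integral_Icc_eq_integral_Ioc, ← intervalIntegral.integral_of_le hT.le]
    linarith [hap.cost_le k]
  refine ⟨u, ⟨hu.measurable, fun t _ => hu.mem t, ?_, hxT,
    hx.mem hT hX.isClosed fun k s => (hap.mem k s).2.1,
    hx.integrableOn_velocity hT hX hU hap.mem hF hu, hode⟩, ?_⟩
  · simpa using hode 0 ⟨le_rfl, hT.le⟩
  · rw [Jcost]
    linarith

theorem exists_isAdmissiblePair_isLeast_QVals (hT : 0 < T) (hX : IsCompact X) (hXT : IsCompact XT)
    (hf : ContinuousOn f (Icc 0 T ×ˢ X)) (hg : ContinuousOn g (Icc 0 T ×ˢ X))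
    (hh : ContinuousOn h (Icc 0 T ×ˢ X ×ˢ Ubox m)) (hH : ContinuousOn H XT)
    (hconv : ∀ t ∈ Icc 0 T, ∀ y ∈ X, ConvexOn ℝ (Ubox m) fun u => h (t, y, u))
    (hQ : ∃ η ηT, QFeasible T X XT x₀ f g η ηT) :
    ∃ x u, IsAdmissiblePair T X XT x₀ f g x u ∧
      IsLeast (QVals T X XT x₀ f g h H) (Jcost T h H x u) := by
  obtain ⟨η, ηT, hη⟩ := hQ
  have hF : ContinuousOn (Fvec f g) (Icc 0 T ×ˢ X ×ˢ Ubox m) :=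
    continuousOn_Fvec hf hg fun z hz => ⟨hz.1, hz.2.1⟩
  have hK := isCompact_Icc_prod_prod_Ubox hX m T
  obtain ⟨C, hFC, hhC, hHC⟩ := exists_nnreal_bound_of_continuousOn hK hXT hF hh hH
  have hP := isRegular_penalizedProblem hF hh hη.nonempty_terminal hFC hhC hHC
  have hlower : ∀ N : ℝ≥0, (penalizedProblem (Icc 0 T ×ˢ X ×ˢ Ubox m) XT (Fvec f g) h H N).value T
      (0, x₀) ∈ lowerBounds (QVals T X XT x₀ f g h H) := by
    rintro N _ ⟨_, _, hη', rfl⟩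
    exact hη'.value_penalizedProblem_le_Qcost hT hX hXT hf hg hh hH (hP N)
  obtain ⟨a, p, hap⟩ := exists_isApproximatingSequence hF hh (hη.nonempty_domain hT)
    hη.nonempty_terminal hFC hhC hHC hT.le (c := sInf (QVals T X XT x₀ f g h H))
    fun N => le_csInf ⟨_, η, ηT, hη, rfl⟩ (hlower N)
  obtain ⟨ψ, x, hψ, hx⟩ := hap.exists_subseq_isLimitCurve hT.le hF hFC
  obtain ⟨u, hxu, hcost⟩ := hx.exists_isAdmissiblePair (hap.comp_strictMono hψ) hT hX hXT.isClosed
    hf hg hh hH hconv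
  exact ⟨x, u, hxu, JVals_subset_QVals hT.le hX hXT hf hg hh ⟨x, u, hxu, rfl⟩,
    fun _ hq => hcost.trans (csInf_le ⟨_, hlower 0⟩ hq)⟩

theorem P_feasible_iff_Q_feasible_and_value_general (hT : 0 < T) (hX : IsCompact X)
    (hXT : IsCompact XT) (hf : ContinuousOn f (Icc 0 T ×ˢ X)) (hg : ContinuousOn g (Icc 0 T ×ˢ X))
    (hh : ContinuousOn h (Icc 0 T ×ˢ X ×ˢ Ubox m)) (hH : ContinuousOn H XT)
    (hconv : ∀ t ∈ Icc 0 T, ∀ y ∈ X, ConvexOn ℝ (Ubox m) fun u => h (t, y, u)) :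
    ((∃ μ μT γ σp σm σh, PFeasible T X XT x₀ f g μ μT γ σp σm σh) ↔
      ∃ η ηT, QFeasible T X XT x₀ f g η ηT) ∧
    ((∃ μ μT γ σp σm σh, PFeasible T X XT x₀ f g μ μT γ σp σm σh) →
      (∃ μ μT γ σp σm σh, PFeasible T X XT x₀ f g μ μT γ σp σm σh ∧
        IsLeast (PVals T X XT x₀ f g h H) (Qcost h H μ μT)) ∧
      sInf (PVals T X XT x₀ f g h H) = sInf (JVals T X XT x₀ f g h H) ∧
      ∃ x u, IsAdmissiblePair T X XT x₀ f g x u ∧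
        IsLeast (JVals T X XT x₀ f g h H) (Jcost T h H x u)) := by
  have hPQ : (∃ μ μT γ σp σm σh, PFeasible T X XT x₀ f g μ μT γ σp σm σh) ↔
      ∃ η ηT, QFeasible T X XT x₀ f g η ηT := by
    simp only [exists_PFeasible_iff_QFeasible hX hf hg]
  refine ⟨hPQ, fun hP => ?_⟩
  obtain ⟨x, u, hxu, hleast⟩ :=
    exists_isAdmissiblePair_isLeast_QVals hT hX hXT hf hg hh hH hconv (hPQ.1 hP)
  have hleast_J : IsLeast (JVals T X XT x₀ f g h H) (Jcost T h H x u) :=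
    ⟨⟨x, u, hxu, rfl⟩, lowerBounds_mono_set (JVals_subset_QVals hT.le hX hXT hf hg hh) hleast.2⟩
  rw [← PVals_eq_QVals hX hf hg] at hleast
  obtain ⟨μ, μT, γ, σp, σm, σh, hμ, hcost⟩ := hleast.1
  exact ⟨⟨μ, μT, γ, σp, σm, σh, hμ, hcost ▸ hleast⟩,
    hleast.csInf_eq.trans hleast_J.csInf_eq.symm, x, u, hxu, hleast_J⟩

end Attainment

/-- (P) is feasible iff (Q) is feasible; and if (P) is feasible then its
infimum p* is attained and p* = J* = J(x*,u*). -/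
theorem P_feasible_iff_Q_feasible_and_value
    {n m : ℕ} (hn : 0 < n) (hm : 0 < m) (T : ℝ) (hT : 0 < T)
    (X XT : Set (Fin n → ℝ)) (hX : IsCompact X) (hXT : IsCompact XT) (hXTsub : XT ⊆ X)
    (x₀ : Fin n → ℝ) (hx₀ : x₀ ∈ X)
    (f : ℝ × (Fin n → ℝ) → Fin n → ℝ) (g : ℝ × (Fin n → ℝ) → Fin n → Fin m → ℝ)
    (hf : ContinuousOn f (Set.Icc (0 : ℝ) T ×ˢ Set.univ))
    (hg : ContinuousOn g (Set.Icc (0 : ℝ) T ×ˢ Set.univ))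
    (h : ℝ × (Fin n → ℝ) × (Fin m → ℝ) → ℝ) (H : (Fin n → ℝ) → ℝ)
    (hh : Continuous h) (hH : Continuous H)
    (xs : ℝ → Fin n → ℝ) (us : ℝ → Fin m → ℝ)
    (hconv : ∀ (t : ℝ) (x : Fin n → ℝ),
      ConvexOn ℝ Set.univ (fun u : Fin m → ℝ => h (t, x, u)))
    (hopt : IsAdmissiblePair T X XT x₀ f g xs us)
    (hleast : IsLeast (JVals T X XT x₀ f g h H) (Jcost T h H xs us))
    (huniq : ∀ (x : ℝ → Fin n → ℝ) (u : ℝ → Fin m → ℝ),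
      IsAdmissiblePair T X XT x₀ f g x u → Jcost T h H x u = Jcost T h H xs us →
      ∀ᵐ t ∂(volume.restrict (Set.Icc (0 : ℝ) T)), x t = xs t ∧ u t = us t)
    :
    ((∃ (μ : Measure (ℝ × (Fin n → ℝ) × (Fin m → ℝ))) (μT : Measure (Fin n → ℝ))
        (γ : Measure (ℝ × (Fin n → ℝ))) (σp σm σh : Fin m → Measure (ℝ × (Fin n → ℝ))),
        PFeasible T X XT x₀ f g μ μT γ σp σm σh) ↔
      (∃ (η : Measure (ℝ × (Fin n → ℝ) × (Fin m → ℝ))) (ηT : Measure (Fin n → ℝ)),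
        QFeasible T X XT x₀ f g η ηT)) ∧
    ((∃ (μ : Measure (ℝ × (Fin n → ℝ) × (Fin m → ℝ))) (μT : Measure (Fin n → ℝ))
        (γ : Measure (ℝ × (Fin n → ℝ))) (σp σm σh : Fin m → Measure (ℝ × (Fin n → ℝ))),
        PFeasible T X XT x₀ f g μ μT γ σp σm σh) →
      (∃ (μ : Measure (ℝ × (Fin n → ℝ) × (Fin m → ℝ))) (μT : Measure (Fin n → ℝ))
        (γ : Measure (ℝ × (Fin n → ℝ))) (σp σm σh : Fin m → Measure (ℝ × (Fin n → ℝ))),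
        PFeasible T X XT x₀ f g μ μT γ σp σm σh ∧
        IsLeast (PVals T X XT x₀ f g h H) (Qcost h H μ μT)) ∧
      sInf (PVals T X XT x₀ f g h H) = sInf (JVals T X XT x₀ f g h H) ∧
      sInf (JVals T X XT x₀ f g h H) = Jcost T h H xs us) := by
  have hsub : Icc 0 T ×ˢ X ⊆ Icc 0 T ×ˢ univ := prod_mono_right (subset_univ X)
  have hconv_box : ∀ t ∈ Icc 0 T, ∀ y ∈ X, ConvexOn ℝ (Ubox m) fun u => h (t, y, u) :=
    fun t _ y _ => (hconv t y).subset (subset_univ _) (convex_Icc _ _)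
  obtain ⟨hPQ, hvalue⟩ := P_feasible_iff_Q_feasible_and_value_general (x₀ := x₀) hT hX hXT
    (hf.mono hsub) (hg.mono hsub) hh.continuousOn hH.continuousOn hconv_box
  exact ⟨hPQ, fun hP => ⟨(hvalue hP).1, (hvalue hP).2.1, hleast.csInf_eq⟩⟩

end
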